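/- arXiv:1108.2463 — 2 statements merged into one kernel-verified Lean document; each statement's English description precedes it below -/
import Mathlib

section
/- (Case n = 2, forward direction.) Let f, g : 𝕋 → ℂ be continuous functions on 𝕋 = AddCircle (2π). Let a_I ≤ b_I and a_J ≤ b_J be real numbers with (b_I − a_I) + (b_J − a_J) < π, and set I = π_*([a_I, b_I]), J = π_*([a_J, b_J]). Assume supp f ⊆ R_2(I) with no strictly smaller closed subinterval I' = π_*([a', b']) (a_I ≤ a', b' ≤ b_I, (a', b') ≠ (a_I, b_I)) satisfying supp f ⊆ R_2(I'), and analogously for g with J. Let a_K, b_K be reals with a_I + a_J ≤ a_K ≤ b_K ≤ b_I + b_J and supp (f ⋆ g) ⊆ R_2(π_*([a_K, b_K])), and set λ = a_K − a_I − a_J. If λ > 0, then there exists α ∈ {1, −1} such that f + α S_π f vanishes on π_*((b_I − π, a_I + λ)) and g − α S_π g vanishes on π_*((b_J − π, a_J + λ)), where S_π denotes the shift by the image of the real number π in 𝕋. -/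
open MeasureTheory Real Set Pointwise

noncomputable section

abbrev 𝕋 : Type := AddCircle (2 * π)

instance : Fact (0 < 2 * π) := ⟨by positivity⟩

/-- Natural projection `ℝ → 𝕋`. -/
def proj : ℝ → 𝕋 := fun r => (r : 𝕋)

/-- Convolution of functions on the circle with respect to Haar (Lebesgue) measure. -/
def circConv (f g : 𝕋 → ℂ) : 𝕋 → ℂ := fun x => ∫ t : 𝕋, f t * g (x - t)

/-- Shift operator `(S_y f)(x) = f (x - y)`. -/
def shift (y : 𝕋) (f : 𝕋 → ℂ) : 𝕋 → ℂ := fun x => f (x - y)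

/-- `R_2 A = A ∪ (π_*(π) + A)`. -/
def R2 (A : Set 𝕋) : Set 𝕋 := A ∪ (proj π +ᵥ A)

/-!
Splitting `f` and `g` into eigenparts of `S_π` and pulling them back to the line turns the circle
problem into two instances, one per sign, of Titchmarsh's convolution theorem on `ℝ`: the lengths of
`I` and `J` add up to less than `π`, so the lifted parts convolve without overlap and their
convolution vanishes to the left of `a_K`. Hence, for each sign, the left support edges of the two
parts have sum at least `a_K > a_I + a_J`. By minimality of `I`, some sign `ε` attains the edge
`a_I`, so the `ε`-part of `g` vanishes up to `a_K - a_I > a_J`; by minimality of `J`, the sign `-ε`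
attains the edge `a_J`, so the `-ε`-part of `f` vanishes up to `a_K - a_J`.

On the line, Titchmarsh's theorem for `h ∗ h` follows from Liouville's theorem applied to a Laplace
transform. For general `f` and `g` with `f ∗ g = 0` to the left of `c`, put
`W i j = (x ^ i f) ∗ (x ^ j g)`. The binomial formula gives
`W i j ∗ (x ^ (i + j) (f ∗ g)) = ∑ (i + j).choose k • (W i (i + j - k) ∗ W k j)`,
where the term `k = i` is a square. For a suitably extremal pair `(i, j)` this square is the only
term reaching leftmost, and the case of squares then shows that every `W i j` vanishes to the left
of `c`. Taking `j = 0` kills all moments of `t ↦ f t * g (x + y - t)` when `x + y < c`.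
-/

namespace TitchmarshCircle

open Filter Topology Function Bornology FourierTransform Convolution CompactlySupported
open Complex (I)
open scoped Complex
open ContinuousLinearMap (mul)
open Finset.HasAntidiagonal (antidiagonal mem_antidiagonal)

section Fourier

variable {V E : Type*} [NormedAddCommGroup V] [InnerProductSpace ℝ V] [FiniteDimensional ℝ V]
  [MeasurableSpace V] [BorelSpace V] [NormedAddCommGroup E] [NormedSpace ℂ E] [CompleteSpace E]

lemma eq_zero_of_fourier_eq_zero {f : V → E} (hf : Integrable f) (hfourier : 𝓕 f = 0) {v : V}
    (hv : ContinuousAt f v) : f v = 0 := by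
  rw [← hf.fourierInv_fourier_eq (by simp [hfourier]) hv, hfourier]
  simp [Real.fourierInv_eq]

lemma eq_of_fourier_eq {f g : V → E} (hf : Continuous f) (hfi : Integrable f) (hg : Continuous g)
    (hgi : Integrable g) (h : 𝓕 f = 𝓕 g) : f = g := by
  have hsub : 𝓕 (f - g) = 0 := by
    funext ξ
    have hint {u : V → E} (hu : Integrable u) := (Real.fourierIntegral_convergent_iff ξ).mpr hu
    simp only [Real.fourier_eq, Pi.sub_apply, smul_sub, Pi.zero_apply]
    rw [integral_sub (hint hfi) (hint hgi), sub_eq_zero]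
    simpa only [Real.fourier_eq] using congrFun h ξ
  funext v
  exact sub_eq_zero.mp (eq_zero_of_fourier_eq_zero (hfi.sub hgi) hsub (hf.sub hg).continuousAt)

end Fourier

section Laplace

variable {f g : ℝ → ℂ}

/-- The two-sided Laplace transform; it is meaningful at those `z` for which the integrand is
integrable, which is every `z` when `f` is integrable with bounded support. -/
def laplace (f : ℝ → ℂ) (z : ℂ) : ℂ := ∫ x : ℝ, cexp (-(z * x)) * f x

lemma fourier_eq_laplace (f : ℝ → ℂ) (ξ : ℝ) : 𝓕 f ξ = laplace f ((2 * π * ξ : ℝ) * I) := by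
  rw [Real.fourier_real_eq_integral_exp_smul, laplace]
  congr! 4 with x
  push_cast
  ring

lemma integrable_continuous_mul (hf : Integrable f) (hbdd : IsBounded (support f)) {p : ℝ → ℂ}
    (hp : Continuous p) : Integrable fun x => p x * f x := by
  obtain ⟨R, hR⟩ := hbdd.subset_closedBall 0
  have hsupp : (support fun x => p x * f x) ⊆ Metric.closedBall 0 R :=
    (support_mul_subset_right _ _).trans hR
  rw [← integrableOn_iff_integrable_of_support_subset hsupp]
  exact hf.integrableOn.continuousOn_mul hp.continuousOn (isCompact_closedBall 0 R)

lemma integrable_exp_mul (hf : Integrable f) (hbdd : IsBounded (support f)) (z : ℂ) :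
    Integrable fun x : ℝ => cexp (-(z * x)) * f x :=
  integrable_continuous_mul hf hbdd (by fun_prop)

lemma laplace_add (hf : Integrable f) (hfb : IsBounded (support f)) (hg : Integrable g)
    (hgb : IsBounded (support g)) (z : ℂ) : laplace (f + g) z = laplace f z + laplace g z := by
  simp only [laplace, Pi.add_apply, mul_add]
  exact integral_add (integrable_exp_mul hf hfb z) (integrable_exp_mul hg hgb z)

lemma laplace_convolution (hf : Integrable f) (hfb : IsBounded (support f)) (hg : Integrable g)
    (hgb : IsBounded (support g)) (z : ℂ) :
    laplace (f ⋆[mul ℂ ℂ] g) z = laplace f z * laplace g z := by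
  have hexp (x : ℝ) : cexp (-(z * x)) * (f ⋆[mul ℂ ℂ] g) x =
      ((fun t : ℝ => cexp (-(z * t)) * f t) ⋆[mul ℂ ℂ] fun t : ℝ => cexp (-(z * t)) * g t) x := by
    rw [convolution_mul, convolution_mul, ← integral_const_mul]
    refine integral_congr_ae (.of_forall fun t => ?_)
    have hadd : cexp (-(z * x)) = cexp (-(z * t)) * cexp (-(z * (x - t : ℝ))) := by
      rw [← Complex.exp_add]
      push_cast
      ring_nf
    simp only [hadd]
    ring
  simp only [laplace, hexp]
  exact integral_convolution (mul ℂ ℂ) (integrable_exp_mul hf hfb z) (integrable_exp_mul hg hgb z)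

lemma norm_exp_mul_laplace_le (hf : Integrable f) {T : ℝ} {z : ℂ}
    (hT : ∀ x ∈ support f, z.re * (T - x) ≤ 0) :
    ‖cexp (z * T) * laplace f z‖ ≤ ∫ x, ‖f x‖ := by
  rw [laplace, ← integral_const_mul]
  refine norm_integral_le_of_norm_le hf.norm (.of_forall fun x => ?_)
  by_cases hx : f x = 0
  · simp [hx]
  · rw [← mul_assoc, ← Complex.exp_add, norm_mul, Complex.norm_exp]
    refine mul_le_of_le_one_left (norm_nonneg _) (Real.exp_le_one_iff.mpr ?_)
    calc (z * T + -(z * x)).re = z.re * (T - x) := by simp; ring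
      _ ≤ 0 := hT x hx

lemma integral_norm_pow_mul_le (hf : Integrable f) {R : ℝ} (hR : ∀ x ∈ support f, |x| ≤ R)
    (n : ℕ) : ∫ x : ℝ, ‖(x : ℂ) ^ n * f x‖ ≤ R ^ n * ∫ x, ‖f x‖ := by
  rw [← integral_const_mul]
  refine integral_mono_of_nonneg (.of_forall fun x => norm_nonneg _) (hf.norm.const_mul _)
    (.of_forall fun x => ?_)
  by_cases hx : f x = 0
  · simp [hx]
  · simp only [norm_mul, norm_pow, Complex.norm_real, Real.norm_eq_abs]
    gcongr
    exact hR x hx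

lemma hasSum_laplace (hf : Integrable f) (hbdd : IsBounded (support f)) (z : ℂ) :
    HasSum (fun n : ℕ => (-z) ^ n / n.factorial * ∫ x : ℝ, (x : ℂ) ^ n * f x) (laplace f z) := by
  obtain ⟨R, hR⟩ := hbdd.exists_norm_le
  let term (n : ℕ) (x : ℝ) : ℂ := (-z) ^ n / n.factorial * ((x : ℂ) ^ n * f x)
  have hint (n : ℕ) : Integrable (term n) :=
    (integrable_continuous_mul hf hbdd (by fun_prop)).const_mul _
  have hnorm (n : ℕ) : ∫ x, ‖term n x‖ ≤ (‖z‖ * R) ^ n / n.factorial * ∫ x, ‖f x‖ := by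
    calc ∫ x, ‖term n x‖ = ‖z‖ ^ n / n.factorial * ∫ x : ℝ, ‖(x : ℂ) ^ n * f x‖ := by
          simp [term, integral_const_mul]
      _ ≤ ‖z‖ ^ n / n.factorial * (R ^ n * ∫ x, ‖f x‖) := by
          gcongr
          exact integral_norm_pow_mul_le hf hR n
      _ = (‖z‖ * R) ^ n / n.factorial * ∫ x, ‖f x‖ := by ring
  have hsummable : Summable fun n => ∫ x, ‖term n x‖ :=
    .of_nonneg_of_le (fun n => integral_nonneg fun x => norm_nonneg _) hnorm
      ((Real.summable_pow_div_factorial _).mul_right _)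
  have hexp (x : ℝ) : ∑' n, term n x = cexp (-(z * x)) * f x := by
    rw [Complex.exp_eq_exp_ℂ, ← (NormedSpace.expSeries_div_hasSum_exp (-(z * x))).tsum_eq,
      ← tsum_mul_right]
    congr! 2 with n
    simp only [term]
    ring
  simpa only [laplace, hexp, term, integral_const_mul] using
    hasSum_integral_of_summable_integral_norm hint hsummable

lemma differentiable_laplace (hf : Integrable f) (hbdd : IsBounded (support f)) :
    Differentiable ℂ (laplace f) := by
  obtain ⟨R, hR⟩ := hbdd.exists_norm_le
  intro z
  let term (n : ℕ) (w : ℂ) : ℂ := (-w) ^ n / n.factorial * ∫ x : ℝ, (x : ℂ) ^ n * f x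
  have hterm (n : ℕ) (w : ℂ) (hw : w ∈ Metric.ball 0 (‖z‖ + 1)) :
      ‖term n w‖ ≤ ((‖z‖ + 1) * R) ^ n / n.factorial * ∫ x, ‖f x‖ := by
    have hw' : ‖w‖ ≤ ‖z‖ + 1 := (mem_ball_zero_iff.mp hw).le
    calc ‖term n w‖ = ‖w‖ ^ n / n.factorial * ‖∫ x : ℝ, (x : ℂ) ^ n * f x‖ := by simp [term]
      _ ≤ (‖z‖ + 1) ^ n / n.factorial * (R ^ n * ∫ x, ‖f x‖) := by
          gcongr
          exact (norm_integral_le_integral_norm _).trans (integral_norm_pow_mul_le hf hR n)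
      _ = ((‖z‖ + 1) * R) ^ n / n.factorial * ∫ x, ‖f x‖ := by rw [mul_pow]; ring
  have hseries : laplace f = fun w => ∑' n, term n w :=
    funext fun w => (hasSum_laplace hf hbdd w).tsum_eq.symm
  rw [hseries]
  exact (Complex.differentiableOn_tsum_of_summable_norm
    ((Real.summable_pow_div_factorial _).mul_right _) (fun n => by fun_prop) Metric.isOpen_ball
    hterm).differentiableAt (Metric.isOpen_ball.mem_nhds (by simp))

lemma eq_zero_of_forall_integral_pow_mul_eq_zero (hf : Integrable f)
    (hbdd : IsBounded (support f)) (h : ∀ n : ℕ, ∫ x : ℝ, (x : ℂ) ^ n * f x = 0) {v : ℝ}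
    (hv : ContinuousAt f v) : f v = 0 := by
  refine eq_zero_of_fourier_eq_zero hf (funext fun ξ => ?_) hv
  rw [fourier_eq_laplace]
  refine (hasSum_laplace hf hbdd _).unique ?_
  simp only [h, mul_zero]
  exact hasSum_zero

-- Liouville makes the bounded entire function constant; Riemann–Lebesgue makes the constant zero.
lemma fourier_eq_zero_of_exp_mul_laplace_bounded (hf : Integrable f)
    (hbdd : IsBounded (support f)) {T C : ℝ} (hC : ∀ z, ‖cexp (z * T) * laplace f z‖ ≤ C) :
    𝓕 f = 0 := by
  let E (z : ℂ) : ℂ := cexp (z * T) * laplace f z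
  have hE : Differentiable ℂ E :=
    (by fun_prop : Differentiable ℂ fun z : ℂ => cexp (z * T)).mul (differentiable_laplace hf hbdd)
  have hconst (z : ℂ) : E z = E 0 := hE.apply_eq_apply_of_bounded
    (isBounded_iff_forall_norm_le.mpr ⟨C, forall_mem_range.mpr hC⟩) z 0
  have hnorm (ξ : ℝ) : ‖𝓕 f ξ‖ = ‖E 0‖ := by
    rw [fourier_eq_laplace, ← hconst ((2 * π * ξ : ℝ) * I), norm_mul, Complex.norm_exp]
    simp
  have hlim : Tendsto (fun _ : ℝ => ‖E 0‖) (cocompact ℝ) (𝓝 0) := by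
    simpa only [hnorm, norm_zero] using (Real.zero_at_infty_fourier f).norm
  funext ξ
  rw [Pi.zero_apply, ← norm_eq_zero, hnorm, tendsto_nhds_unique hlim tendsto_const_nhds]

end Laplace

section ConvolutionOnLine

variable {f g h : C_c(ℝ, ℂ)}

lemma integrable_compactlySupported (f : C_c(ℝ, ℂ)) : Integrable f :=
  f.continuous.integrable_of_hasCompactSupport f.hasCompactSupport

lemma isBounded_support_compactlySupported (f : C_c(ℝ, ℂ)) : IsBounded (support f) :=
  f.hasCompactSupport.isBounded.subset (subset_tsupport f)

lemma convolutionExists_compactlySupported (f g : C_c(ℝ, ℂ)) :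
    ConvolutionExists f g (mul ℂ ℂ) :=
  g.hasCompactSupport.convolutionExists_right _ f.continuous.locallyIntegrable g.continuous

/-- Convolution as a bilinear product on the compactly supported continuous functions on `ℝ`. -/
def conv : C_c(ℝ, ℂ) →ₗ[ℂ] C_c(ℝ, ℂ) →ₗ[ℂ] C_c(ℝ, ℂ) :=
  LinearMap.mk₂ ℂ
    (fun f g =>
      { toFun := f ⋆[mul ℂ ℂ] g
        continuous_toFun := g.hasCompactSupport.continuous_convolution_right _
          f.continuous.locallyIntegrable g.continuous
        hasCompactSupport' := f.hasCompactSupport.convolution _ g.hasCompactSupport })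
    (fun f₁ f₂ g => DFunLike.coe_injective <|
      (convolutionExists_compactlySupported f₁ g).add_distrib
        (convolutionExists_compactlySupported f₂ g))
    (fun _ _ _ => DFunLike.coe_injective smul_convolution)
    (fun f g₁ g₂ => DFunLike.coe_injective <|
      (convolutionExists_compactlySupported f g₁).distrib_add
        (convolutionExists_compactlySupported f g₂))
    (fun _ _ _ => DFunLike.coe_injective convolution_smul)

local notation:70 f:70 "∗" g:71 => conv f g

lemma conv_coe (f g : C_c(ℝ, ℂ)) : ⇑(f ∗ g) = f ⋆[mul ℂ ℂ] g := rfl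

lemma conv_apply (f g : C_c(ℝ, ℂ)) (x : ℝ) : (f ∗ g) x = ∫ t, f t * g (x - t) :=
  convolution_mul

lemma fourier_conv (f g : C_c(ℝ, ℂ)) (ξ : ℝ) : 𝓕 ⇑(f ∗ g) ξ = 𝓕 ⇑f ξ * 𝓕 ⇑g ξ :=
  Real.fourier_mul_convolution_eq (integrable_compactlySupported f)
    (integrable_compactlySupported g) ξ

lemma conv_conv_conv_swap (a b c d : C_c(ℝ, ℂ)) : (a ∗ b) ∗ (c ∗ d) = (a ∗ d) ∗ (c ∗ b) := by
  refine DFunLike.coe_injective (eq_of_fourier_eq (map_continuous _)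
    (integrable_compactlySupported _) (map_continuous _) (integrable_compactlySupported _) ?_)
  funext ξ
  simp only [fourier_conv]
  ring

lemma eqOn_zero_conv {s t : ℝ} (hf : EqOn f 0 (Iio s)) (hg : EqOn g 0 (Iio t)) :
    EqOn (f ∗ g) 0 (Iio (s + t)) := by
  intro x hx
  refine (conv_apply f g x).trans (integral_eq_zero_of_ae (.of_forall fun u => ?_))
  rcases lt_or_ge u s with hu | hu
  · simp [hf hu]
  · have hxu : x - u < t := by linarith [mem_Iio.mp hx]
    simp [hg hxu]

lemma norm_exp_mul_laplace_le_sqrt {T : ℝ} (hsq : EqOn (h ∗ h) 0 (Iio (2 * T))) {z : ℂ}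
    (hz : 0 ≤ z.re) : ‖cexp (z * T) * laplace h z‖ ≤ √(∫ x, ‖(h ∗ h) x‖) := by
  have hprod : (cexp (z * T) * laplace h z) ^ 2 =
      cexp (z * (2 * T : ℝ)) * laplace (h ∗ h) z := by
    rw [conv_coe, laplace_convolution (integrable_compactlySupported h)
      (isBounded_support_compactlySupported h) (integrable_compactlySupported h)
      (isBounded_support_compactlySupported h), mul_pow, ← Complex.exp_nat_mul]
    push_cast
    ring_nf
  refine Real.le_sqrt_of_sq_le ?_
  rw [← norm_pow, hprod]
  refine norm_exp_mul_laplace_le (integrable_compactlySupported _) fun x hx => ?_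
  exact mul_nonpos_of_nonneg_of_nonpos hz (sub_nonpos.mpr (not_lt.mp fun hlt => hx (hsq hlt)))

lemma isBounded_support_indicator (s : Set ℝ) (h : C_c(ℝ, ℂ)) :
    IsBounded (support (s.indicator h)) :=
  (isBounded_support_compactlySupported h).subset
    (support_indicator.trans_subset inter_subset_right)

lemma laplace_indicator_Iio_add_indicator_Ici (h : C_c(ℝ, ℂ)) (T : ℝ) (z : ℂ) :
    laplace (indicator (Iio T) h) z + laplace (indicator (Ici T) h) z = laplace h z := by
  have hint := integrable_compactlySupported h
  rw [← laplace_add (hint.indicator measurableSet_Iio) (isBounded_support_indicator _ _)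
    (hint.indicator measurableSet_Ici) (isBounded_support_indicator _ _), ← compl_Iio,
    indicator_self_add_compl]

/- The entire function `z ↦ exp (z T) L(z)`, with `L` the Laplace transform of the part of `h` left
of `T`, is bounded for `re z ≤ 0` trivially, and for `re z ≥ 0` because the square of
`exp (z T) (laplace h z)` is bounded there. -/
lemma fourier_indicator_Iio_eq_zero_of_sq {T : ℝ} (hsq : EqOn (h ∗ h) 0 (Iio (2 * T))) :
    𝓕 (indicator (Iio T) h) = 0 := by
  have hint := integrable_compactlySupported h
  have hleft := hint.indicator (measurableSet_Iio (a := T))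
  have hright := hint.indicator (measurableSet_Ici (a := T))
  let C := ∫ x, ‖indicator (Iio T) h x‖
  let D := √(∫ x, ‖(h ∗ h) x‖) + ∫ x, ‖indicator (Ici T) h x‖
  refine fourier_eq_zero_of_exp_mul_laplace_bounded (T := T) (C := max C D) hleft
    (isBounded_support_indicator _ _) fun z => ?_
  rcases le_total z.re 0 with hz | hz
  · refine le_max_of_le_left (norm_exp_mul_laplace_le hleft fun x hx => ?_)
    have hxT : x ∈ Iio T := support_indicator_subset hx
    exact mul_nonpos_of_nonpos_of_nonneg hz (by linarith [mem_Iio.mp hxT])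
  · refine le_max_of_le_right ?_
    rw [← add_sub_cancel_right (laplace (indicator (Iio T) h) z),
      laplace_indicator_Iio_add_indicator_Ici, mul_sub]
    refine (norm_sub_le _ _).trans (add_le_add (norm_exp_mul_laplace_le_sqrt hsq hz)
      (norm_exp_mul_laplace_le hright fun x hx => ?_))
    have hTx : x ∈ Ici T := support_indicator_subset hx
    exact mul_nonpos_of_nonneg_of_nonpos hz (by linarith [mem_Ici.mp hTx])

lemma eqOn_zero_of_eqOn_zero_conv_self {T : ℝ} (hsq : EqOn (h ∗ h) 0 (Iio (2 * T))) :
    EqOn h 0 (Iio T) := by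
  intro x hx
  have hnear : indicator (Iio T) h =ᶠ[𝓝 x] h := by
    filter_upwards [Iio_mem_nhds hx] with y hy using indicator_of_mem hy h
  rw [← hnear.eq_of_nhds]
  exact eq_zero_of_fourier_eq_zero
    ((integrable_compactlySupported h).indicator measurableSet_Iio)
    (fourier_indicator_Iio_eq_zero_of_sq hsq) (h.continuous.continuousAt.congr hnear.symm)

/-- The product of a compactly supported function with the `n`-th power of the coordinate. -/
def mulPow (n : ℕ) (f : C_c(ℝ, ℂ)) : C_c(ℝ, ℂ) :=
  (⟨fun x => (x : ℂ) ^ n, by fun_prop⟩ : C(ℝ, ℂ)) • f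

lemma mulPow_apply (n : ℕ) (f : C_c(ℝ, ℂ)) (x : ℝ) : mulPow n f x = (x : ℂ) ^ n * f x := rfl

lemma integrable_mul_comp_sub (f g : C_c(ℝ, ℂ)) (x : ℝ) : Integrable fun t => f t * g (x - t) :=
  (f.continuous.mul (g.continuous.comp (continuous_const.sub continuous_id)))
    |>.integrable_of_hasCompactSupport f.hasCompactSupport.mul_right

lemma mulPow_conv (k : ℕ) (f g : C_c(ℝ, ℂ)) :
    mulPow k (f ∗ g) =
      ∑ m ∈ antidiagonal k, k.choose m.1 • (mulPow m.1 f ∗ mulPow m.2 g) := by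
  ext x
  simp only [mulPow_apply, CompactlySupportedContinuousMap.sum_apply,
    CompactlySupportedContinuousMap.smul_apply, conv_apply, nsmul_eq_mul, ← integral_const_mul]
  rw [← integral_finsetSum _ fun m _ =>
    (integrable_mul_comp_sub (mulPow m.1 f) (mulPow m.2 g) x).const_mul _]
  congr! 2 with t
  have hbinom : (x : ℂ) ^ k = ∑ m ∈ antidiagonal k,
      k.choose m.1 • ((t : ℂ) ^ m.1 * ((x - t : ℝ) : ℂ) ^ m.2) := by
    rw [← (Commute.all _ _).add_pow']
    push_cast
    ring
  rw [hbinom, Finset.sum_mul]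
  refine Finset.sum_congr rfl fun m _ => ?_
  rw [nsmul_eq_mul]
  ring

lemma conv_mulPow_conv_mulPow (f g : C_c(ℝ, ℂ)) (i j : ℕ) :
    (mulPow i f ∗ mulPow j g) ∗ mulPow (i + j) (f ∗ g) =
      ∑ m ∈ antidiagonal (i + j), (i + j).choose m.1 •
        ((mulPow i f ∗ mulPow m.2 g) ∗ (mulPow m.1 f ∗ mulPow j g)) := by
  rw [mulPow_conv]
  simp only [map_sum, map_nsmul]
  refine Finset.sum_congr rfl fun m _ => ?_
  rw [conv_conv_conv_swap]

lemma sqrt_add_sqrt_lt {x y : ℝ} (hx : 0 ≤ x) (hy : 0 ≤ y) (hne : x ≠ y) :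
    √x + √y < 2 * √((x + y) / 2) := by
  have hmid := Real.strictConcaveOn_sqrt.2 hx hy hne one_half_pos one_half_pos (add_halves 1)
  simp only [smul_eq_mul] at hmid
  rw [show (x + y) / 2 = 1 / 2 * x + 1 / 2 * y by ring]
  linarith

lemma exists_forall_add_sqrt_le {A : ℕ → ℕ → ℝ} {B r : ℝ} (hB : ∀ i j, B ≤ A i j)
    (hr : 0 < r) :
    ∃ i j, ∀ k l, A i j + r * √((i : ℝ) + j) ≤ A k l + r * √((k : ℝ) + l) := by
  have hsum : Tendsto (fun p : ℕ × ℕ => p.1 + p.2) cofinite atTop := by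
    rw [← Nat.cofinite_eq_atTop]
    refine Tendsto.cofinite_of_finite_preimage_singleton fun n => ?_
    exact (antidiagonal n).finite_toSet.subset fun p hp => by simpa using hp
  have hsqrt : Tendsto (fun p : ℕ × ℕ => r * √((p.1 + p.2 : ℕ) : ℝ)) cofinite atTop :=
    (Real.tendsto_sqrt_atTop.comp (tendsto_natCast_atTop_atTop.comp hsum)).const_mul_atTop hr
  obtain ⟨⟨i, j⟩, hmin⟩ := (tendsto_atTop_add_left_of_le _ B (fun p => hB p.1 p.2)
    hsqrt).exists_forall_le
  exact ⟨i, j, fun k l => by simpa using hmin (k, l)⟩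

/- Minimising `A i j + r √(i + j)` works for all small `r > 0`, by the strict concavity of `√`:
`(i, m.2)` and `(m.1, j)` have the mean degree `i + j` but different degrees unless `m = (i, j)`. -/
lemma exists_forall_antidiagonal_two_mul_lt {A : ℕ → ℕ → ℝ} {B c : ℝ} (hB : ∀ i j, B ≤ A i j)
    {i₀ j₀ : ℕ} (hc : A i₀ j₀ < c) :
    ∃ i j, A i j < c ∧ ∀ m ∈ antidiagonal (i + j), m ≠ (i, j) →
      2 * A i j < A i m.2 + A m.1 j := by
  let s := √((i₀ : ℝ) + j₀)
  have hs : 0 < s + 1 := by positivity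
  let r := (c - A i₀ j₀) / (s + 1)
  have hr : 0 < r := div_pos (sub_pos.mpr hc) hs
  have hrs : r * s < c - A i₀ j₀ := by
    rw [← div_mul_cancel₀ (c - A i₀ j₀) hs.ne']
    exact mul_lt_mul_of_pos_left (lt_add_one s) hr
  obtain ⟨i, j, hmin⟩ := exists_forall_add_sqrt_le hB hr
  refine ⟨i, j, ?_, fun m hm hne => ?_⟩
  · have hpos : 0 ≤ r * √((i : ℝ) + j) := by positivity
    linarith [hmin i₀ j₀]
  · have hsum : m.1 + m.2 = i + j := mem_antidiagonal.mp hm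
    have hdegree : (i : ℝ) + m.2 ≠ m.1 + j := by
      norm_cast
      exact fun heq => hne (Prod.ext (by omega) (by omega))
    have hmean : ((i : ℝ) + m.2 + (m.1 + j)) / 2 = i + j := by
      have hsum' : (m.1 : ℝ) + m.2 = i + j := mod_cast hsum
      linarith
    have hconcave := sqrt_add_sqrt_lt (by positivity) (by positivity) hdegree
    rw [hmean] at hconcave
    linarith [hmin i m.2, hmin m.1 j, mul_lt_mul_of_pos_left hconcave hr]

/-- The left end of the support of `h`, truncated at `c` so that it is finite for `h = 0`. -/
def leftEdge (c : ℝ) (h : C_c(ℝ, ℂ)) : ℝ := sInf (insert c (support h))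

lemma bddBelow_insert_support (c : ℝ) (h : C_c(ℝ, ℂ)) : BddBelow (insert c (support h)) :=
  (isBounded_support_compactlySupported h).bddBelow.insert c

lemma eqOn_zero_Iio_leftEdge (c : ℝ) (h : C_c(ℝ, ℂ)) : EqOn h 0 (Iio (leftEdge c h)) := by
  intro x hx
  by_contra hne
  exact (mem_Iio.mp hx).not_ge
    (csInf_le (bddBelow_insert_support c h) (mem_insert_of_mem c hne))

lemma le_leftEdge {c T : ℝ} (hT : T ≤ c) (hzero : EqOn h 0 (Iio T)) : T ≤ leftEdge c h := by
  refine le_csInf (insert_nonempty _ _) (forall_mem_insert.mpr ⟨hT, fun x hx => ?_⟩)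
  exact not_lt.mp fun hlt => hx (hzero hlt)

lemma eqOn_zero_mulPow {s : Set ℝ} (hf : EqOn f 0 s) (n : ℕ) : EqOn (mulPow n f) 0 s :=
  fun x hx => by simp [mulPow_apply, hf hx]

lemma exists_forall_le_leftEdge_mulPow_conv_mulPow (c : ℝ) (f g : C_c(ℝ, ℂ)) :
    ∃ B, ∀ i j, B ≤ leftEdge c (mulPow i f ∗ mulPow j g) := by
  refine ⟨min c (leftEdge 0 f + leftEdge 0 g), fun i j => le_leftEdge (min_le_left _ _) ?_⟩
  exact (eqOn_zero_conv (eqOn_zero_mulPow (eqOn_zero_Iio_leftEdge 0 f) i)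
    (eqOn_zero_mulPow (eqOn_zero_Iio_leftEdge 0 g) j)).mono (Iio_subset_Iio (min_le_right _ _))

lemma eqOn_zero_mulPow_conv_mulPow_conv_self {s : Set ℝ} {i j : ℕ}
    (hleft : EqOn ((mulPow i f ∗ mulPow j g) ∗ mulPow (i + j) (f ∗ g)) 0 s)
    (hothers : ∀ m ∈ antidiagonal (i + j), m ≠ (i, j) →
      EqOn ((mulPow i f ∗ mulPow m.2 g) ∗ (mulPow m.1 f ∗ mulPow j g)) 0 s) :
    EqOn ((mulPow i f ∗ mulPow j g) ∗ (mulPow i f ∗ mulPow j g)) 0 s := by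
  intro x hx
  have hsum := hleft hx
  rw [conv_mulPow_conv_mulPow, CompactlySupportedContinuousMap.sum_apply,
    Finset.sum_eq_single_of_mem (i, j) (mem_antidiagonal.mpr rfl) fun m hm hne => by
      simp [hothers m hm hne hx]] at hsum
  have hchoose : (i + j).choose i ≠ 0 := (Nat.choose_pos (Nat.le_add_right i j)).ne'
  simpa [hchoose] using hsum

lemma eqOn_zero_mulPow_conv_mulPow {c : ℝ} (hfg : EqOn (f ∗ g) 0 (Iio c)) (i j : ℕ) :
    EqOn (mulPow i f ∗ mulPow j g) 0 (Iio c) := by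
  let W (i j : ℕ) : C_c(ℝ, ℂ) := mulPow i f ∗ mulPow j g
  let A (i j : ℕ) : ℝ := leftEdge c (W i j)
  suffices hc : c ≤ A i j from (eqOn_zero_Iio_leftEdge c (W i j)).mono (Iio_subset_Iio hc)
  by_contra! hlt
  obtain ⟨B, hB⟩ := exists_forall_le_leftEdge_mulPow_conv_mulPow c f g
  obtain ⟨k, l, hkl, hothers⟩ := exists_forall_antidiagonal_two_mul_lt (A := A) hB hlt
  have hnear (u : ℝ) (hu : 2 * A k l < u) : ∀ᶠ T in 𝓝[>] A k l, 2 * T < u :=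
    (continuousAt_const.mul continuousAt_id).eventually_lt continuousAt_const hu
      |>.filter_mono nhdsWithin_le_nhds
  obtain ⟨T, hAT, hTc, hTA⟩ : ∃ T, A k l < T ∧ 2 * T < A k l + c ∧
      ∀ m ∈ antidiagonal (k + l), m ≠ (k, l) → 2 * T < A k m.2 + A m.1 l := by
    refine (eventually_mem_nhdsWithin.and ((hnear _ (by linarith)).and ?_)).exists
    refine (Filter.eventually_all_finset _).mpr fun m hm => ?_
    exact eventually_imp_distrib_left.mpr fun hne => hnear _ (hothers m hm hne)
  have hsq : EqOn (W k l ∗ W k l) 0 (Iio (2 * T)) := by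
    refine eqOn_zero_mulPow_conv_mulPow_conv_self ?_ fun m hm hne => ?_
    · exact (eqOn_zero_conv (eqOn_zero_Iio_leftEdge c _) (eqOn_zero_mulPow hfg _)).mono
        (Iio_subset_Iio hTc.le)
    · exact (eqOn_zero_conv (eqOn_zero_Iio_leftEdge c _) (eqOn_zero_Iio_leftEdge c _)).mono
        (Iio_subset_Iio (hTA m hm hne).le)
  exact hAT.not_ge (le_leftEdge (by linarith) (eqOn_zero_of_eqOn_zero_conv_self hsq))

theorem eq_zero_or_eq_zero_of_eqOn_zero_conv {c : ℝ} (hfg : EqOn (f ∗ g) 0 (Iio c)) {x y : ℝ}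
    (hxy : x + y < c) : f x = 0 ∨ g y = 0 := by
  have hmoment (n : ℕ) : ∫ t : ℝ, (t : ℂ) ^ n * (f t * g (x + y - t)) = 0 := by
    have hvanish : (mulPow n f ∗ mulPow 0 g) (x + y) = 0 :=
      eqOn_zero_mulPow_conv_mulPow hfg n 0 hxy
    simpa only [conv_apply, mulPow_apply, pow_zero, one_mul, mul_assoc] using hvanish
  have hzero := eq_zero_of_forall_integral_pow_mul_eq_zero (integrable_mul_comp_sub f g (x + y))
    ((isBounded_support_compactlySupported f).subset (support_mul_subset_left _ _)) hmoment
    (v := x) (by fun_prop)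
  simpa using hzero

end ConvolutionOnLine

section SignSplitting

lemma exists_forall_gt_not_eqOn_zero {F : ℤˣ → ℝ → ℂ} {a : ℝ}
    (hF : ∀ c > a, ∃ ε, ¬ EqOn (F ε) 0 (Iio c)) : ∃ ε, ∀ c > a, ¬ EqOn (F ε) 0 (Iio c) := by
  by_contra! hcon
  choose c hc hzero using hcon
  obtain ⟨ε, hε⟩ := hF (min (c 1) (c (-1))) (lt_min (hc 1) (hc (-1)))
  refine hε ((hzero ε).mono (Iio_subset_Iio ?_))
  rcases Int.units_eq_one_or ε with rfl | rfl
  exacts [min_le_left _ _, min_le_right _ _]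

lemma eqOn_zero_Iio_sub {F G : ℝ → ℂ} {a k : ℝ} (hFG : ∀ x y, x + y < k → F x = 0 ∨ G y = 0)
    (hF : ∀ c > a, ¬ EqOn F 0 (Iio c)) : EqOn G 0 (Iio (k - a)) := by
  intro y hy
  obtain ⟨x, hx, hFx⟩ : ∃ x ∈ Iio (k - y), F x ≠ 0 := by
    simpa [EqOn] using hF (k - y) (by linarith [mem_Iio.mp hy])
  exact (hFG x y (by linarith [mem_Iio.mp hx])).resolve_left hFx

lemma exists_sign_eqOn_zero {F G : ℤˣ → ℝ → ℂ} {a b k : ℝ} (hk : a + b < k)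
    (hFG : ∀ ε x y, x + y < k → F ε x = 0 ∨ G ε y = 0)
    (hF : ∀ c > a, ∃ ε, ¬ EqOn (F ε) 0 (Iio c)) (hG : ∀ c > b, ∃ ε, ¬ EqOn (G ε) 0 (Iio c)) :
    ∃ ε, EqOn (F (-ε)) 0 (Iio (k - b)) ∧ EqOn (G ε) 0 (Iio (k - a)) := by
  obtain ⟨ε, hε⟩ := exists_forall_gt_not_eqOn_zero hF
  have hGε : EqOn (G ε) 0 (Iio (k - a)) := eqOn_zero_Iio_sub (hFG ε) hε
  have hGneg (c : ℝ) (hc : c > b) : ¬ EqOn (G (-ε)) 0 (Iio c) := by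
    intro hzero
    obtain ⟨δ, hδ⟩ := hG (min c (k - a)) (lt_min hc (by linarith))
    have hδε : δ = -ε := Int.units_ne_iff_eq_neg.mp fun heq =>
      hδ (heq ▸ hGε.mono (Iio_subset_Iio (min_le_right _ _)))
    exact hδ (hδε ▸ hzero.mono (Iio_subset_Iio (min_le_left _ _)))
  refine ⟨ε, eqOn_zero_Iio_sub (fun y x hyx => ?_) hGneg, hGε⟩
  exact (hFG (-ε) x y (by linarith)).symm

end SignSplitting

section Circle

variable {f g h : 𝕋 → ℂ} {a b aI bI aJ bJ : ℝ}

lemma proj_add (x y : ℝ) : proj (x + y) = proj x + proj y := rfl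

lemma proj_sub (x y : ℝ) : proj (x - y) = proj x - proj y := rfl

lemma continuous_proj : Continuous proj := AddCircle.continuous_mk' _

lemma proj_pi_add_proj_pi : proj π + proj π = 0 := by
  rw [← proj_add, ← two_mul]
  exact AddCircle.coe_period (2 * π)

lemma add_proj_pi (x : 𝕋) : x + proj π = x - proj π := by
  rw [eq_sub_iff_add_eq, add_assoc, proj_pi_add_proj_pi, add_zero]

lemma proj_sub_int_mul_pi (x : ℝ) (n : ℤ) :
    proj (x - n * π) = proj x ∨ proj (x - n * π) = proj x - proj π := by
  have hperiod (k : ℤ) : proj (k * (2 * π)) = 0 :=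
    (AddCircle.coe_eq_zero_iff _).mpr ⟨k, zsmul_eq_mul _ _⟩
  rcases n.even_or_odd' with ⟨k, rfl | rfl⟩
  · left
    rw [show x - (2 * k : ℤ) * π = x - k * (2 * π) by push_cast; ring, proj_sub, hperiod, sub_zero]
  · right
    rw [show x - (2 * k + 1 : ℤ) * π = x - k * (2 * π) - π by push_cast; ring, proj_sub, proj_sub,
      hperiod, sub_zero]

lemma proj_mem_R2_image {s : Set ℝ} {x : ℝ} :
    proj x ∈ R2 (proj '' s) ↔ ∃ n : ℤ, x - n * π ∈ s := by
  constructor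
  · have hint {x y : ℝ} (hxy : proj x = proj y) : ∃ n : ℤ, x - (2 * n : ℤ) * π = y := by
      rw [← sub_eq_zero, ← proj_sub] at hxy
      obtain ⟨n, hn⟩ := (AddCircle.coe_eq_zero_iff _).mp hxy
      exact ⟨n, by push_cast; linarith [zsmul_eq_mul (2 * π) n]⟩
    rintro (⟨y, hy, hxy⟩ | ⟨-, ⟨y, hy, rfl⟩, hxy⟩)
    · obtain ⟨n, rfl⟩ := hint hxy.symm
      exact ⟨2 * n, hy⟩
    · obtain ⟨n, hn⟩ := hint (y := π + y) hxy.symm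
      refine ⟨2 * n + 1, ?_⟩
      rwa [show x - (2 * n + 1 : ℤ) * π = y by push_cast at hn ⊢; linarith]
  · rintro ⟨n, hn⟩
    rcases proj_sub_int_mul_pi x n with hproj | hproj
    · exact Or.inl ⟨_, hn, hproj⟩
    · exact Or.inr ⟨_, ⟨_, hn, rfl⟩, by simp [hproj]⟩

lemma mem_R2_image_of_sub_proj_pi_mem {s : Set ℝ} {x : 𝕋} (hx : x - proj π ∈ R2 (proj '' s)) :
    x ∈ R2 (proj '' s) := by
  obtain ⟨y, rfl⟩ := QuotientAddGroup.mk_surjective x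
  obtain ⟨n, hn⟩ := (proj_mem_R2_image (x := y - π)).mp hx
  refine proj_mem_R2_image.mpr ⟨n + 1, ?_⟩
  rwa [show y - (n + 1 : ℤ) * π = y - π - n * π by push_cast; ring]

lemma isClosed_R2_image_Icc (a b : ℝ) : IsClosed (R2 (proj '' Icc a b)) := by
  have hcompact : IsCompact (proj '' Icc a b) := isCompact_Icc.image continuous_proj
  exact hcompact.isClosed.union (hcompact.vadd (proj π)).isClosed

lemma mem_Icc_of_proj_mem_R2 {x : ℝ} (hx : x ∈ Ioo (b - π) (a + π))
    (hmem : proj x ∈ R2 (proj '' Icc a b)) : x ∈ Icc a b := by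
  obtain ⟨n, hn₁, hn₂⟩ := proj_mem_R2_image.mp hmem
  have hlt : n < 1 := by
    by_contra! hge
    have : (1 : ℝ) ≤ n := mod_cast hge
    nlinarith [hx.2, Real.pi_pos]
  have hgt : -1 < n := by
    by_contra! hle
    have : (n : ℝ) ≤ -1 := mod_cast hle
    nlinarith [hx.1, Real.pi_pos]
  obtain rfl : n = 0 := by omega
  simpa using And.intro hn₁ hn₂

/-- `f + ε S_π f` for a sign `ε`, the part of `f` (up to the factor `2`) on which `S_π` acts as
multiplication by `ε`. -/
def twistedSum (ε : ℤˣ) (f : 𝕋 → ℂ) : 𝕋 → ℂ := fun x => f x + ((ε : ℤ) : ℂ) * shift (proj π) f x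

lemma continuous_twistedSum (hf : Continuous f) (ε : ℤˣ) : Continuous (twistedSum ε f) := by
  unfold twistedSum shift
  fun_prop

lemma sign_mul_self (ε : ℤˣ) : ((ε : ℤ) : ℂ) * ((ε : ℤ) : ℂ) = 1 := by
  rw [← Int.cast_mul, ← Units.val_mul, Int.units_mul_self, Units.val_one, Int.cast_one]

lemma twistedSum_sub_proj_pi (ε : ℤˣ) (f : 𝕋 → ℂ) (x : 𝕋) :
    twistedSum ε f (x - proj π) = ((ε : ℤ) : ℂ) * twistedSum ε f x := by
  simp only [twistedSum, shift, mul_add, ← mul_assoc, sign_mul_self, one_mul, sub_sub,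
    proj_pi_add_proj_pi, sub_zero]
  ring

lemma support_twistedSum_subset {s : Set ℝ} (hf : support f ⊆ R2 (proj '' s)) (ε : ℤˣ) :
    support (twistedSum ε f) ⊆ R2 (proj '' s) := by
  intro x hx
  by_contra hmem
  have hfx : f x = 0 := notMem_support.mp fun hne => hmem (hf hne)
  have hfx' : f (x - proj π) = 0 :=
    notMem_support.mp fun hne => hmem (mem_R2_image_of_sub_proj_pi_mem (hf hne))
  exact hx (by simp [twistedSum, shift, hfx, hfx'])

lemma eq_zero_of_forall_twistedSum_eq_zero {x : 𝕋} (hx : ∀ ε, twistedSum ε f x = 0) :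
    f x = 0 ∧ f (x - proj π) = 0 := by
  have hplus := hx 1
  have hminus := hx (-1)
  simp only [twistedSum, shift, Units.val_one, Units.val_neg, Int.cast_one, Int.cast_neg]
    at hplus hminus
  constructor
  · linear_combination (hplus + hminus) / 2
  · linear_combination (hplus - hminus) / 2

lemma integrable_mul_comp_sub_circle (hf : Continuous f) (hg : Continuous g) (x : 𝕋) :
    Integrable fun t => f t * g (x - t) :=
  Continuous.integrable_of_hasCompactSupport (by fun_prop) (HasCompactSupport.of_compactSpace _)

lemma circConv_twistedSum (hf : Continuous f) (hg : Continuous g) (ε : ℤˣ) :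
    circConv f (twistedSum ε g) = twistedSum ε (circConv f g) := by
  funext x
  simp only [circConv, twistedSum, shift, mul_add]
  rw [← integral_const_mul, ← integral_add (integrable_mul_comp_sub_circle hf hg x)
    ((integrable_mul_comp_sub_circle hf hg _).const_mul _)]
  congr! 3 with t
  rw [sub_right_comm]
  ring

lemma integral_circle_eq_intervalIntegral_half {u : 𝕋 → ℂ} (hu : Continuous u) (t₀ : ℝ) :
    ∫ t, u t = ∫ t in t₀..t₀ + π, (u (proj t) + u (proj t - proj π)) := by
  have hint (a b : ℝ) : IntervalIntegrable (fun t => u (proj t)) volume a b :=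
    (hu.comp continuous_proj).intervalIntegrable a b
  have hsecond : ∫ t in t₀..t₀ + π, u (proj t - proj π) =
      ∫ t in t₀ + π..t₀ + 2 * π, u (proj t) := by
    rw [show t₀ + 2 * π = t₀ + π + π by ring,
      ← intervalIntegral.integral_comp_add_right (fun t => u (proj t)) π]
    simp only [proj_add, add_proj_pi]
  have hintShift : IntervalIntegrable (fun t => u (proj t - proj π)) volume t₀ (t₀ + π) :=
    (hu.comp (continuous_proj.sub continuous_const)).intervalIntegrable _ _
  rw [intervalIntegral.integral_add (hint _ _) hintShift, hsecond,
    intervalIntegral.integral_add_adjacent_intervals (hint _ _) (hint _ _)]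
  exact (AddCircle.intervalIntegral_preimage (2 * π) t₀ u).symm

lemma twistedSum_circConv_eq_intervalIntegral (hf : Continuous f) (hg : Continuous g) (ε : ℤˣ)
    (x t₀ : ℝ) : twistedSum ε (circConv f g) (proj x) =
      ∫ t in t₀..t₀ + π, twistedSum ε f (proj t) * twistedSum ε g (proj (x - t)) := by
  have hg' := continuous_twistedSum hg ε
  rw [← circConv_twistedSum hf hg, circConv,
    integral_circle_eq_intervalIntegral_half (by fun_prop) t₀]
  refine intervalIntegral.integral_congr fun t _ => ?_
  have hshift : twistedSum ε g (proj x - (proj t - proj π)) =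
      ((ε : ℤ) : ℂ) * twistedSum ε g (proj (x - t)) := by
    rw [← twistedSum_sub_proj_pi, proj_sub, ← add_proj_pi]
    congr 1
    abel
  simp only [hshift]
  simp only [twistedSum, shift, proj_sub]
  ring

/-- The pullback of `h` to the line, cut off outside the window `[a, b]`. -/
def lift (a b : ℝ) (h : 𝕋 → ℂ) : ℝ → ℂ := indicator (Icc a b) (h ∘ proj)

lemma lift_apply (hh : support h ⊆ R2 (proj '' Icc a b)) {x : ℝ} (hx : x ∈ Ioo (b - π) (a + π)) :
    lift a b h x = h (proj x) :=
  indicator_apply_eq_self.mpr fun hnot => notMem_support.mp fun hne =>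
    hnot (mem_Icc_of_proj_mem_R2 hx (hh hne))

lemma continuous_lift (hab : b - a < π) (hcont : Continuous h)
    (hh : support h ⊆ R2 (proj '' Icc a b)) : Continuous (lift a b h) := by
  refine continuous_iff_continuousAt.mpr fun x => ?_
  by_cases hx : x ∈ Icc a b
  · refine (hcont.comp continuous_proj).continuousAt.congr ?_
    filter_upwards [Ioo_mem_nhds (show b - π < x by linarith [hx.1])
      (show x < a + π by linarith [hx.2])] with y hy using (lift_apply hh hy).symm
  · refine (continuousAt_const (y := (0 : ℂ))).congr ?_
    filter_upwards [isClosed_Icc.isOpen_compl.mem_nhds hx] with y hy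
      using (indicator_of_notMem hy _).symm

lemma support_lift_subset (a b : ℝ) (h : 𝕋 → ℂ) : support (lift a b h) ⊆ Icc a b :=
  support_indicator_subset

lemma eqOn_zero_lift_Iio (a b : ℝ) (h : 𝕋 → ℂ) : EqOn (lift a b h) 0 (Iio a) :=
  fun _ hx => indicator_of_notMem (fun hmem => hmem.1.not_gt hx) _

lemma integral_lift_mul_lift (hIlen : bI - aI < π) (hf : Continuous f) (hg : Continuous g)
    (hsf : support f ⊆ R2 (proj '' Icc aI bI)) (hsg : support g ⊆ R2 (proj '' Icc aJ bJ))
    (ε : ℤˣ) {x : ℝ} (hx : x ∈ Ioo (bI + bJ - π) (aI + aJ + π)) :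
    ∫ t, lift aI bI (twistedSum ε f) t * lift aJ bJ (twistedSum ε g) (x - t) =
      twistedSum ε (circConv f g) (proj x) := by
  let t₀ := (aI + bI - π) / 2
  have hsupp : (support fun t => lift aI bI (twistedSum ε f) t *
      lift aJ bJ (twistedSum ε g) (x - t)) ⊆ Ioc t₀ (t₀ + π) := by
    refine (support_mul_subset_left _ _).trans ((support_lift_subset _ _ _).trans fun t ht => ?_)
    constructor <;> simp only [t₀] <;> linarith [ht.1, ht.2]
  rw [twistedSum_circConv_eq_intervalIntegral hf hg ε x t₀,
    ← intervalIntegral.integral_eq_integral_of_support_subset hsupp]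
  refine intervalIntegral.integral_congr fun t ht => ?_
  rw [uIcc_of_le (by linarith [Real.pi_pos])] at ht
  have ht' : t ∈ Ioo (bI - π) (aI + π) := by
    constructor <;> simp only [t₀, mem_Icc] at ht <;> linarith [ht.1, ht.2]
  simp only [lift_apply (support_twistedSum_subset hsf ε) ht']
  by_cases hft : twistedSum ε f (proj t) = 0
  · simp only [hft, zero_mul]
  · have htI := mem_Icc_of_proj_mem_R2 ht' (support_twistedSum_subset hsf ε hft)
    rw [lift_apply (support_twistedSum_subset hsg ε)
      ⟨by linarith [hx.1, htI.2], by linarith [hx.2, htI.1]⟩]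

lemma lift_eq_zero_or_lift_eq_zero (hI : aI ≤ bI) (hJ : aJ ≤ bJ)
    (hlen : (bI - aI) + (bJ - aJ) < π) (hf : Continuous f) (hg : Continuous g)
    (hsf : support f ⊆ R2 (proj '' Icc aI bI)) (hsg : support g ⊆ R2 (proj '' Icc aJ bJ))
    {aK bK : ℝ} (hKab : aK ≤ bK) (hbK : bK < aI + aJ + π)
    (hsfg : support (circConv f g) ⊆ R2 (proj '' Icc aK bK)) (ε : ℤˣ) {x y : ℝ}
    (hxy : x + y < aK) :
    lift aI bI (twistedSum ε f) x = 0 ∨ lift aJ bJ (twistedSum ε g) y = 0 := by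
  have hIlen : bI - aI < π := by linarith
  have hJlen : bJ - aJ < π := by linarith
  let F : C_c(ℝ, ℂ) := ⟨⟨lift aI bI (twistedSum ε f), continuous_lift hIlen
    (continuous_twistedSum hf ε) (support_twistedSum_subset hsf ε)⟩,
    .of_support_subset_isCompact isCompact_Icc (support_lift_subset _ _ _)⟩
  let G : C_c(ℝ, ℂ) := ⟨⟨lift aJ bJ (twistedSum ε g), continuous_lift hJlen
    (continuous_twistedSum hg ε) (support_twistedSum_subset hsg ε)⟩,
    .of_support_subset_isCompact isCompact_Icc (support_lift_subset _ _ _)⟩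
  refine eq_zero_or_eq_zero_of_eqOn_zero_conv (f := F) (g := G) (fun z hz => ?_) hxy
  rw [mem_Iio] at hz
  rcases lt_or_ge z (aI + aJ) with hlow | hhigh
  · exact eqOn_zero_conv (f := F) (g := G) (eqOn_zero_lift_Iio _ _ _) (eqOn_zero_lift_Iio _ _ _)
      hlow
  · calc conv F G z = twistedSum ε (circConv f g) (proj z) :=
          (conv_apply F G z).trans (integral_lift_mul_lift hIlen hf hg hsf hsg ε
            ⟨by linarith, by linarith⟩)
      _ = 0 := notMem_support.mp fun hne => hz.not_ge
          (mem_Icc_of_proj_mem_R2 ⟨by linarith, by linarith [Real.pi_pos]⟩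
            (support_twistedSum_subset hsfg ε hne)).1

lemma exists_not_eqOn_zero_lift_twistedSum (hab : b - a < π)
    (hsf : support f ⊆ R2 (proj '' Icc a b)) {c : ℝ}
    (hc : ¬ tsupport f ⊆ R2 (proj '' Icc c b)) :
    ∃ ε, ¬ EqOn (lift a b (twistedSum ε f)) 0 (Iio c) := by
  contrapose! hc
  refine closure_minimal (fun x hx => ?_) (isClosed_R2_image_Icc c b)
  obtain ⟨x, rfl⟩ := QuotientAddGroup.mk_surjective x
  obtain ⟨n, hn⟩ := proj_mem_R2_image.mp (hsf hx)
  refine proj_mem_R2_image.mpr ⟨n, ⟨?_, hn.2⟩⟩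
  by_contra! hlt
  obtain ⟨hzero, hzero'⟩ := eq_zero_of_forall_twistedSum_eq_zero
    (f := f) (x := proj (x - n * π)) fun ε => by
      rw [← lift_apply (support_twistedSum_subset hsf ε)
        ⟨by linarith [hn.1], by linarith [hn.2]⟩]
      exact hc ε hlt
  have hx' : proj x = proj (x - n * π - (-n : ℤ) * π) := by
    congr 1
    push_cast
    ring
  refine hx ?_
  change f (proj x) = 0
  rcases proj_sub_int_mul_pi (x - n * π) (-n) with hproj | hproj <;> rw [hx', hproj] <;> assumption

end Circle

end TitchmarshCircle

open TitchmarshCircle in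
theorem titchmarsh_circle_n2_forward_general
    (f g : 𝕋 → ℂ) (hf : Continuous f) (hg : Continuous g)
    (aI bI aJ bJ : ℝ) (hI : aI ≤ bI) (hJ : aJ ≤ bJ) (hlen : (bI - aI) + (bJ - aJ) < π)
    (hsf : tsupport f ⊆ R2 (proj '' Icc aI bI))
    (hminf : ∀ a' > aI, ¬ tsupport f ⊆ R2 (proj '' Icc a' bI))
    (hsg : tsupport g ⊆ R2 (proj '' Icc aJ bJ))
    (hming : ∀ a' > aJ, ¬ tsupport g ⊆ R2 (proj '' Icc a' bJ))
    (aK bK : ℝ) (hKab : aK ≤ bK) (hbK : bK < aI + aJ + π)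
    (hsfg : tsupport (circConv f g) ⊆ R2 (proj '' Icc aK bK))
    (hlam : 0 < aK - aI - aJ) :
    ∃ α : ℂ, (α = 1 ∨ α = -1) ∧
      (∀ x ∈ proj '' Ioo (bI - π) (aI + (aK - aI - aJ)),
        f x + α * shift (proj π) f x = 0) ∧
      (∀ x ∈ proj '' Ioo (bJ - π) (aJ + (aK - aI - aJ)),
        g x - α * shift (proj π) g x = 0) := by
  replace hsf := (subset_tsupport f).trans hsf
  replace hsg := (subset_tsupport g).trans hsg
  replace hsfg := (subset_tsupport _).trans hsfg
  obtain ⟨ε, hfε, hgε⟩ := exists_sign_eqOn_zero (a := aI) (b := aJ) (k := aK) (by linarith)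
    (fun ε x y => lift_eq_zero_or_lift_eq_zero hI hJ hlen hf hg hsf hsg hKab hbK hsfg ε)
    (fun c hc => exists_not_eqOn_zero_lift_twistedSum (by linarith) hsf (hminf c hc))
    (fun c hc => exists_not_eqOn_zero_lift_twistedSum (by linarith) hsg (hming c hc))
  refine ⟨((-ε : ℤˣ) : ℤ), ?_, ?_, ?_⟩
  · rcases Int.units_eq_one_or ε with rfl | rfl <;> simp
  · rintro - ⟨x, hx, rfl⟩
    have hwindow : x ∈ Ioo (bI - π) (aI + π) := ⟨hx.1, by linarith [hx.2]⟩
    exact (lift_apply (support_twistedSum_subset hsf (-ε)) hwindow).symm.trans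
      (hfε (mem_Iio.mpr (by linarith [hx.2])))
  · rintro - ⟨x, hx, rfl⟩
    have hwindow : x ∈ Ioo (bJ - π) (aJ + π) := ⟨hx.1, by linarith [hx.2]⟩
    have hzero := (lift_apply (support_twistedSum_subset hsg ε) hwindow).symm.trans
      (hgε (mem_Iio.mpr (by linarith [hx.2])))
    simpa [twistedSum] using hzero

/-- Titchmarsh theorem on the circle, case `n = 2`, forward direction. -/
theorem titchmarsh_circle_n2_forward
    (f g : 𝕋 → ℂ) (hf : Continuous f) (hg : Continuous g)
    (aI bI aJ bJ : ℝ) (hI : aI ≤ bI) (hJ : aJ ≤ bJ)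
    (hlen : (bI - aI) + (bJ - aJ) < π)
    (hsf : tsupport f ⊆ R2 (proj '' Icc aI bI))
    (hminf : ∀ a' b' : ℝ, aI ≤ a' → b' ≤ bI → (a', b') ≠ (aI, bI) →
      ¬ tsupport f ⊆ R2 (proj '' Icc a' b'))
    (hsg : tsupport g ⊆ R2 (proj '' Icc aJ bJ))
    (hming : ∀ a' b' : ℝ, aJ ≤ a' → b' ≤ bJ → (a', b') ≠ (aJ, bJ) →
      ¬ tsupport g ⊆ R2 (proj '' Icc a' b'))
    (aK bK : ℝ) (haK : aI + aJ ≤ aK) (hKab : aK ≤ bK) (hbK : bK ≤ bI + bJ)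
    (hsfg : tsupport (circConv f g) ⊆ R2 (proj '' Icc aK bK))
    (hlam : 0 < aK - aI - aJ) :
    ∃ α : ℂ, (α = 1 ∨ α = -1) ∧
      (∀ x ∈ proj '' Ioo (bI - π) (aI + (aK - aI - aJ)),
        f x + α * shift (proj π) f x = 0) ∧
      (∀ x ∈ proj '' Ioo (bJ - π) (aJ + (aK - aI - aJ)),
        g x - α * shift (proj π) g x = 0) :=
  titchmarsh_circle_n2_forward_general f g hf hg aI bI aJ bJ hI hJ hlen hsf
    (fun a' ha' => hminf a' bI ha'.le le_rfl (by simpa using ha'.ne')) hsg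
    (fun a' ha' => hming a' bJ ha'.le le_rfl (by simpa using ha'.ne')) aK bK hKab (by linarith)
    hsfg hlam

end
end

section
/- (Titchmarsh theorem for powers of a distribution on a circle, continuous-function version.) Let n ≥ 1, p ≥ 1, and let f : 𝕋 → ℂ be a continuous function on 𝕋 = AddCircle (2π). Let a ≤ b be real numbers with b − a < 2π/(pn), and set I = π_*([a, b]). Assume supp f ⊆ R_n(I) and that there is no strictly smaller closed subinterval I' = π_*([a', b']) (with a ≤ a', b' ≤ b, and (a', b') ≠ (a, b)) satisfying supp f ⊆ R_n(I'). Then supp (f^{⋆p}) ⊆ R_n(π_*([p·a, p·b])), and for all reals a', b' with p·a ≤ a', b' ≤ p·b and (a', b') ≠ (p·a, p·b), one has supp (f^{⋆p}) ⊄ R_n(π_*([a', b'])); that is, the smallest closed subinterval K of π_*([p·a, p·b]) with supp (f^{⋆p}) ⊆ R_n(K) is π_*([p·a, p·b]) itself. -/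
open MeasureTheory Real Set Pointwise

noncomputable section

/-- `circConvPow f k` is the `(k+1)`-fold convolution `f ⋆ f ⋆ ⋯ ⋆ f`. -/
def circConvPow (f : 𝕋 → ℂ) : ℕ → (𝕋 → ℂ)
  | 0 => f
  | k + 1 => circConv (circConvPow f k) f

/-- `Rn n A = ⋃_{k=0}^{n-1} (π_*(2πk/n) + A)`. -/
def Rn (n : ℕ) (A : Set 𝕋) : Set 𝕋 :=
  ⋃ k ∈ Finset.range n, (proj (2 * π * k / n) +ᵥ A)

/-!
For a character `e` of the circle and the coordinate `ρ` along the arc, consider the entire function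
`z ↦ ∫ f e exp (z ρ)`. As long as the arcs are short, `ρ` is additive on supports, so this transform
turns convolution powers into powers. If `f^{⋆p}` lives in `ρ ≤ p c`, its transform is
`O(exp (p c Re z))` on the right half-plane, so that of `f` is `O(exp (c Re z))`. Multiply by
`exp (-c z)` and subtract the contribution of `{ρ ≤ c}`: what remains is bounded on both
half-planes, hence constant by Liouville's theorem, and tends to `0` as `z → -∞`. So `f e` has
integral zero over `{ρ > c}` for every `e`, and `f` vanishes there. The lower endpoint follows by
changing the sign of `ρ`. The rotations by `2πk/n` are the kernel of `x ↦ n • x`, so `R_n` is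
accommodated by composing `ρ` with this map.
-/

section ExpTransform

open Filter

variable {X : Type*} [MeasurableSpace X] {μ : Measure X} {u : X → ℂ} {ρ : X → ℝ} {M : ℝ}

/-- The two-sided Laplace transform of the push-forward by `ρ` of the complex measure `u μ`, with
the sign convention of moment generating functions. -/
def expTransform (μ : Measure X) (u : X → ℂ) (ρ : X → ℝ) (z : ℂ) : ℂ :=
  ∫ x, u x * Complex.exp (z * ρ x) ∂μ

theorem expTransform_zero : expTransform μ u ρ 0 = ∫ x, u x ∂μ := by
  simp [expTransform]

theorem expTransform_neg (z : ℂ) : expTransform μ u (-ρ) z = expTransform μ u ρ (-z) := by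
  simp [expTransform]

theorem expTransform_sub_const (c : ℝ) (z : ℂ) :
    expTransform μ u (fun x ↦ ρ x - c) z = expTransform μ u ρ z * Complex.exp (-(z * c)) := by
  rw [expTransform, expTransform, ← integral_mul_const]
  congr with x
  rw [mul_assoc, ← Complex.exp_add]
  push_cast
  ring_nf

theorem norm_cexp_mul_ofReal_le (z : ℂ) {r : ℝ} (hr : |r| ≤ M) :
    ‖Complex.exp (z * r)‖ ≤ rexp (‖z‖ * M) :=
  calc ‖Complex.exp (z * r)‖ ≤ rexp ‖z * r‖ := Complex.norm_exp_le_exp_norm _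
    _ = rexp (‖z‖ * |r|) := by rw [norm_mul, Complex.norm_real, Real.norm_eq_abs]
    _ ≤ rexp (‖z‖ * M) := by gcongr

theorem integrable_mul_cexp (hu : Integrable u μ) (hρ : Measurable ρ) (hM : ∀ x, |ρ x| ≤ M)
    (z : ℂ) : Integrable (fun x ↦ u x * Complex.exp (z * ρ x)) μ :=
  hu.mul_bdd (by fun_prop) (.of_forall fun x ↦ norm_cexp_mul_ofReal_le z (hM x))

theorem differentiable_expTransform (hu : Integrable u μ) (hρ : Measurable ρ)
    (hM : ∀ x, |ρ x| ≤ M) : Differentiable ℂ (expTransform μ u ρ) := by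
  intro z₀
  have deriv_bound : ∀ x, ∀ z ∈ Metric.ball z₀ 1,
      ‖u x * (Complex.exp (z * ρ x) * ρ x)‖ ≤ ‖u x‖ * (rexp ((‖z₀‖ + 1) * M) * M) := by
    intro x z hz
    have hM₀ : 0 ≤ M := (abs_nonneg _).trans (hM x)
    have hz' : ‖z‖ ≤ ‖z₀‖ + 1 := by
      rw [mem_ball_iff_norm] at hz
      linarith [norm_le_norm_add_norm_sub' z z₀]
    rw [norm_mul, norm_mul, Complex.norm_real]
    gcongr
    · exact (norm_cexp_mul_ofReal_le z (hM x)).trans (by gcongr)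
    · exact hM x
  exact (hasDerivAt_integral_of_dominated_loc_of_deriv_le
    (F' := fun z x ↦ u x * (Complex.exp (z * ρ x) * ρ x))
    (Metric.ball_mem_nhds z₀ one_pos)
    (.of_forall fun z ↦ (integrable_mul_cexp hu hρ hM z).aestronglyMeasurable)
    (integrable_mul_cexp hu hρ hM z₀)
    (hu.aestronglyMeasurable.mul (by fun_prop))
    (.of_forall deriv_bound) (hu.norm.mul_const _)
    (.of_forall fun x z _ ↦ (hasDerivAt_mul_const _).cexp.const_mul _)).2.differentiableAt

theorem norm_expTransform_le (hu : Integrable u μ) {z : ℂ} {B : ℝ}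
    (hB : ∀ x, u x ≠ 0 → z.re * ρ x ≤ B) :
    ‖expTransform μ u ρ z‖ ≤ (∫ x, ‖u x‖ ∂μ) * rexp B := by
  rw [← integral_mul_const]
  refine norm_integral_le_of_norm_le (hu.norm.mul_const _) (.of_forall fun x ↦ ?_)
  by_cases hx : u x = 0
  · simp [hx]
  · rw [norm_mul, Complex.norm_exp, Complex.re_mul_ofReal]
    gcongr
    exact hB x hx

theorem tendsto_expTransform_neg_natCast (hu : Integrable u μ) (hρ : Measurable ρ)
    (hpos : ∀ x, u x ≠ 0 → 0 < ρ x) :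
    Tendsto (fun k : ℕ ↦ expTransform μ u ρ (-k)) atTop (nhds 0) := by
  have norm_integrand (k : ℕ) (x : X) :
      ‖u x * Complex.exp (-k * ρ x)‖ = ‖u x‖ * rexp (-k * ρ x) := by
    rw [norm_mul, Complex.norm_exp, Complex.re_mul_ofReal, Complex.neg_re, Complex.natCast_re]
  rw [← integral_zero X ℂ (μ := μ)]
  refine tendsto_integral_of_dominated_convergence (fun x ↦ ‖u x‖)
    (fun k ↦ hu.aestronglyMeasurable.mul (by fun_prop)) hu.norm
    (fun k ↦ .of_forall fun x ↦ ?_) (.of_forall fun x ↦ ?_)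
  · by_cases hx : u x = 0
    · simp [hx]
    · rw [norm_integrand]
      have : -k * ρ x ≤ 0 := by nlinarith [hpos x hx, k.cast_nonneg (α := ℝ)]
      exact mul_le_of_le_one_right (norm_nonneg _) (Real.exp_le_one_iff.2 this)
  · by_cases hx : u x = 0
    · simp [hx]
    · rw [tendsto_zero_iff_norm_tendsto_zero]
      simp only [norm_integrand]
      rw [← mul_zero ‖u x‖]
      exact (Real.tendsto_exp_atBot.comp <|
        (tendsto_neg_atTop_atBot.comp tendsto_natCast_atTop_atTop).atBot_mul_const
          (hpos x hx)).const_mul _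

theorem integral_eq_zero_of_norm_expTransform_le (hu : Integrable u μ) (hρ : Measurable ρ)
    (hM : ∀ x, |ρ x| ≤ M) (hpos : ∀ x, u x ≠ 0 → 0 < ρ x) {C : ℝ}
    (hC : ∀ z : ℂ, 0 ≤ z.re → ‖expTransform μ u ρ z‖ ≤ C) :
    ∫ x, u x ∂μ = 0 := by
  have hbdd : Bornology.IsBounded (range (expTransform μ u ρ)) := by
    refine isBounded_iff_forall_norm_le.2 ⟨max C (∫ x, ‖u x‖ ∂μ), ?_⟩
    rintro _ ⟨z, rfl⟩
    rcases le_total 0 z.re with hz | hz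
    · exact (hC z hz).trans (le_max_left _ _)
    · refine le_max_of_le_right ?_
      simpa using norm_expTransform_le (B := 0) hu fun x hx ↦
        mul_nonpos_of_nonpos_of_nonneg hz (hpos x hx).le
  have hconst (z w : ℂ) : expTransform μ u ρ z = expTransform μ u ρ w :=
    (differentiable_expTransform hu hρ hM).apply_eq_apply_of_bounded hbdd z w
  have hlim := tendsto_expTransform_neg_natCast hu hρ hpos
  simp only [hconst _ 0, tendsto_const_nhds_iff] at hlim
  rw [← expTransform_zero (ρ := ρ), hlim]

theorem setIntegral_pos_eq_zero_of_norm_expTransform_le (hu : Integrable u μ) (hρ : Measurable ρ)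
    (hM : ∀ x, |ρ x| ≤ M) {C : ℝ} (hC : ∀ z : ℂ, 0 ≤ z.re → ‖expTransform μ u ρ z‖ ≤ C) :
    ∫ x in {x | 0 < ρ x}, u x ∂μ = 0 := by
  set S : Set X := {x | 0 < ρ x}
  have hS : MeasurableSet S := measurableSet_lt measurable_const hρ
  have split (z : ℂ) : expTransform μ (S.indicator u) ρ z =
      expTransform μ u ρ z - expTransform μ (Sᶜ.indicator u) ρ z := by
    rw [expTransform, expTransform, expTransform,
      ← integral_sub (integrable_mul_cexp hu hρ hM z)
        (integrable_mul_cexp (hu.indicator hS.compl) hρ hM z)]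
    congr with x
    rw [indicator_compl, Pi.sub_apply]
    ring
  rw [← integral_indicator hS]
  refine integral_eq_zero_of_norm_expTransform_le (hu.indicator hS) hρ hM
    (fun x ↦ mem_of_indicator_ne_zero) (C := C + ∫ x, ‖Sᶜ.indicator u x‖ ∂μ) fun z hz ↦ ?_
  rw [split]
  refine (norm_sub_le _ _).trans (add_le_add (hC z hz) ?_)
  simpa using norm_expTransform_le (B := 0) (hu.indicator hS.compl) fun x hx ↦
    mul_nonpos_of_nonneg_of_nonpos hz (not_lt.1 (mem_of_indicator_ne_zero hx))

theorem setIntegral_gt_eq_zero_of_norm_expTransform_le (hu : Integrable u μ) (hρ : Measurable ρ)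
    (hM : ∀ x, |ρ x| ≤ M) {c C : ℝ}
    (hC : ∀ z : ℂ, 0 ≤ z.re → ‖expTransform μ u ρ z‖ ≤ C * rexp (c * z.re)) :
    ∫ x in {x | c < ρ x}, u x ∂μ = 0 := by
  simp only [← sub_pos (b := c)]
  refine setIntegral_pos_eq_zero_of_norm_expTransform_le (M := M + |c|) (C := C) hu
    (hρ.sub_const c) (fun x ↦ (abs_sub _ _).trans (by gcongr; exact hM x)) fun z hz ↦ ?_
  calc ‖expTransform μ u (fun x ↦ ρ x - c) z‖
      = ‖expTransform μ u ρ z‖ * rexp (-(c * z.re)) := by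
        rw [expTransform_sub_const, norm_mul, Complex.norm_exp, Complex.neg_re,
          Complex.re_mul_ofReal, mul_comm z.re]
    _ ≤ C * rexp (c * z.re) * rexp (-(c * z.re)) := by gcongr; exact hC z hz
    _ = C := by rw [mul_assoc, ← Real.exp_add, add_neg_cancel, Real.exp_zero, mul_one]

theorem setIntegral_gt_eq_zero_of_expTransform_eq_pow {Y : Type*} [MeasurableSpace Y]
    {ν : Measure Y} {v : Y → ℂ} {σ : Y → ℝ} {q : ℕ} {c : ℝ} (hq : q ≠ 0) (hu : Integrable u μ)
    (hρ : Measurable ρ) (hM : ∀ x, |ρ x| ≤ M) (hv : Integrable v ν)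
    (hσ : ∀ y, v y ≠ 0 → σ y ≤ q * c)
    (hpow : ∀ z, expTransform ν v σ z = expTransform μ u ρ z ^ q) :
    ∫ x in {x | c < ρ x}, u x ∂μ = 0 := by
  set K : ℝ := ∫ y, ‖v y‖ ∂ν
  refine setIntegral_gt_eq_zero_of_norm_expTransform_le (C := max 1 K) hu hρ hM fun z hz ↦ ?_
  refine le_of_pow_le_pow_left₀ hq (by positivity) ?_
  calc ‖expTransform μ u ρ z‖ ^ q = ‖expTransform ν v σ z‖ := by rw [hpow, norm_pow]
    _ ≤ K * rexp (z.re * (q * c)) :=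
      norm_expTransform_le hv fun y hy ↦ mul_le_mul_of_nonneg_left (hσ y hy) hz
    _ ≤ max 1 K ^ q * rexp (z.re * (q * c)) := by
      gcongr
      exact (le_max_right 1 K).trans (le_self_pow₀ (le_max_left _ _) hq)
    _ = (max 1 K * rexp (c * z.re)) ^ q := by
      rw [mul_pow, ← Real.exp_nat_mul]
      ring_nf

end ExpTransform

section Convolution

open scoped Convolution
open Function (support)

variable {G : Type*} [AddCommGroup G] [MeasurableSpace G] {μ : Measure G}

theorem convolution_mul_eq_of_mul_on_support {𝕜 : Type*} [RCLike 𝕜] {f g χ χ₁ χ₂ : G → 𝕜}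
    (hχ : ∀ s ∈ support f, ∀ t ∈ support g, χ (s + t) = χ₁ s * χ₂ t) :
    (f ⋆[ContinuousLinearMap.mul 𝕜 𝕜, μ] g) * χ =
      (f * χ₁) ⋆[ContinuousLinearMap.mul 𝕜 𝕜, μ] (g * χ₂) := by
  ext x
  simp only [Pi.mul_apply, convolution_mul, ← integral_mul_const]
  congr with t
  by_cases hft : f t = 0
  · simp [hft]
  by_cases hgt : g (x - t) = 0
  · simp [hgt]
  have := hχ t hft (x - t) hgt
  rw [add_sub_cancel] at this
  rw [this]
  ring

theorem expTransform_convolution [MeasurableAdd₂ G] [MeasurableNeg G] [SFinite μ]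
    [μ.IsAddRightInvariant] {f g : G → ℂ} {ρ ρ₁ ρ₂ : G → ℝ} {z : ℂ}
    (hf : Integrable (fun x ↦ f x * Complex.exp (z * ρ₁ x)) μ)
    (hg : Integrable (fun x ↦ g x * Complex.exp (z * ρ₂ x)) μ)
    (hρ : ∀ s ∈ support f, ∀ t ∈ support g, ρ (s + t) = ρ₁ s + ρ₂ t) :
    expTransform μ (f ⋆[ContinuousLinearMap.mul ℂ ℂ, μ] g) ρ z =
      expTransform μ f ρ₁ z * expTransform μ g ρ₂ z := by
  have exp_mul_on_support : ∀ s ∈ support f, ∀ t ∈ support g,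
      Complex.exp (z * ρ (s + t)) = Complex.exp (z * ρ₁ s) * Complex.exp (z * ρ₂ t) := by
    intro s hs t ht
    rw [hρ s hs t ht, ← Complex.exp_add]
    push_cast
    ring_nf
  have hconv := convolution_mul_eq_of_mul_on_support (μ := μ)
    (χ := fun x ↦ Complex.exp (z * ρ x)) exp_mul_on_support
  calc expTransform μ (f ⋆[ContinuousLinearMap.mul ℂ ℂ, μ] g) ρ z
      = ∫ x, ((fun x ↦ f x * Complex.exp (z * ρ₁ x)) ⋆[ContinuousLinearMap.mul ℂ ℂ, μ]
          (fun x ↦ g x * Complex.exp (z * ρ₂ x))) x ∂μ := congrArg (integral μ) hconv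
    _ = expTransform μ f ρ₁ z * expTransform μ g ρ₂ z := integral_convolution _ hf hg

end Convolution

section Vanishing

theorem tsupport_subset_of_ae {X E : Type*} [TopologicalSpace X] [MeasurableSpace X]
    [OpensMeasurableSpace X] {μ : Measure X} [μ.IsOpenPosMeasure] [TopologicalSpace E] [T2Space E]
    [Zero E] {f : X → E} (hf : Continuous f) {K : Set X} (hK : IsClosed K)
    (h : ∀ᵐ x ∂μ, f x ≠ 0 → x ∈ K) : tsupport f ⊆ K := by
  have hzero : EqOn f 0 Kᶜ := by
    refine Measure.eqOn_open_of_ae_eq (μ := μ) ?_ hK.isOpen_compl hf.continuousOn continuousOn_const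
    rw [Filter.EventuallyEq, ae_restrict_iff' hK.measurableSet.compl]
    filter_upwards [h] with x hx hxK
    exact not_not.1 (mt hx hxK)
  exact closure_minimal (fun x hx ↦ not_not.1 fun hxK ↦ hx (hzero hxK)) hK

variable {T : ℝ} [Fact (0 < T)]

theorem ae_eq_zero_of_integral_mul_fourier_eq_zero {g : AddCircle T → ℂ} (hg : MemLp g 2)
    (h : ∀ m : ℤ, ∫ x, g x * fourier m x = 0) : g =ᵐ[volume] 0 := by
  have hT : ENNReal.ofReal T ≠ 0 := ENNReal.ofReal_ne_zero_iff.2 Fact.out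
  have hT' : (ENNReal.ofReal T).toReal ≠ 0 := ENNReal.toReal_ne_zero.2 ⟨hT, ENNReal.ofReal_ne_top⟩
  rw [AddCircle.volume_eq_smul_haarAddCircle] at h hg ⊢
  have hg' : MemLp g 2 (AddCircle.haarAddCircle (T := T)) := by
    simpa [smul_smul, ENNReal.inv_mul_cancel hT] using
      hg.smul_measure (ENNReal.inv_ne_top.2 hT)
  have fourierCoeff_eq_zero (m : ℤ) : fourierCoeff g m = 0 := by
    have := h (-m)
    rw [integral_smul_measure, smul_eq_zero_iff_right hT'] at this
    simpa only [fourierCoeff, smul_eq_mul, mul_comm] using this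
  have toLp_eq_zero : hg'.toLp g = 0 := by
    apply fourierBasis.repr.injective
    ext m
    rw [fourierBasis_repr, fourierCoeff_congr_ae hg'.coeFn_toLp, fourierCoeff_eq_zero]
    simp
  have hae : g =ᵐ[AddCircle.haarAddCircle] 0 :=
    hg'.coeFn_toLp.symm.trans (Lp.eq_zero_iff_ae_eq_zero.1 toLp_eq_zero)
  exact Measure.ae_smul_measure hae _

theorem ae_notMem_of_setIntegral_mul_fourier_eq_zero {f : AddCircle T → ℂ} (hf : MemLp f 2)
    {S : Set (AddCircle T)} (hS : MeasurableSet S)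
    (h : ∀ m : ℤ, ∫ x in S, f x * fourier m x = 0) : ∀ᵐ x, f x ≠ 0 → x ∉ S := by
  have indicator_ae_eq_zero : S.indicator f =ᵐ[volume] 0 := by
    refine ae_eq_zero_of_integral_mul_fourier_eq_zero (hf.indicator hS) fun m ↦ ?_
    rw [← h m, ← integral_indicator hS]
    simp only [indicator_mul_left]
  filter_upwards [indicator_ae_eq_zero] with x hx hfx hxS
  rw [indicator_of_mem hxS] at hx
  exact hfx hx

theorem ae_le_of_expTransform_eq_pow {f F : AddCircle T → ℂ} {ρ σ : AddCircle T → ℝ} {M c : ℝ}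
    {q : ℕ} (hq : q ≠ 0) (hf : MemLp f 2) (hF : Integrable F) (hρ : Measurable ρ)
    (hM : ∀ x, |ρ x| ≤ M) (hσ : ∀ x, F x ≠ 0 → σ x ≤ q * c)
    (hpow : ∀ (m : ℤ) (z : ℂ), expTransform volume (F * ⇑(fourier m)) σ z =
      expTransform volume (f * ⇑(fourier m)) ρ z ^ q) :
    ∀ᵐ x, f x ≠ 0 → ρ x ≤ c := by
  simp only [← not_lt]
  refine ae_notMem_of_setIntegral_mul_fourier_eq_zero (S := {x | c < ρ x})
    hf (measurableSet_lt measurable_const hρ) fun m ↦ ?_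
  have integrable_mul_fourier {g : AddCircle T → ℂ} (hg : Integrable g) :
      Integrable (g * ⇑(fourier m)) :=
    hg.mul_bdd (c := 1) (fourier m).continuous.aestronglyMeasurable
      (.of_forall fun x ↦ (fourier_norm m).le.trans' ((fourier m).norm_coe_le_norm x))
  exact setIntegral_gt_eq_zero_of_expTransform_eq_pow hq
    (integrable_mul_fourier (hf.integrable one_le_two)) hρ hM (integrable_mul_fourier hF)
    (fun x hx ↦ hσ x (left_ne_zero_of_mul hx)) (hpow m)

end Vanishing

section ArcCoord

variable {T : ℝ} [Fact (0 < T)]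

/-- The coordinate in `[α, α + T)` of the point `n • x` of the circle of length `T`. It is constant
on the orbits of the rotation by `T / n`, and turns `R_n` of an arc into a real interval. -/
def arcCoord (n : ℕ) (α : ℝ) (x : AddCircle T) : ℝ :=
  AddCircle.equivIco T α (n • x)

variable {n : ℕ} {α β : ℝ} {x y : AddCircle T}

theorem arcCoord_mem_Ico (n : ℕ) (α : ℝ) (x : AddCircle T) : arcCoord n α x ∈ Ico α (α + T) :=
  (AddCircle.equivIco T α (n • x)).2

theorem coe_arcCoord (n : ℕ) (α : ℝ) (x : AddCircle T) : (arcCoord n α x : AddCircle T) = n • x :=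
  AddCircle.coe_equivIco

theorem arcCoord_eq_iff {r : ℝ} (hr : r ∈ Ico α (α + T)) :
    arcCoord n α x = r ↔ n • x = (r : AddCircle T) := by
  constructor
  · rintro rfl
    exact (coe_arcCoord n α x).symm
  · intro h
    rw [arcCoord, h, AddCircle.equivIco_coe_of_mem hr]

theorem measurable_arcCoord (n : ℕ) (α : ℝ) : Measurable (arcCoord (T := T) n α) :=
  measurable_subtype_coe.comp <|
    (AddCircle.measurableEquivIco T α).measurable.comp (continuous_nsmul n).measurable

theorem abs_arcCoord_le (n : ℕ) (α : ℝ) (x : AddCircle T) : |arcCoord n α x| ≤ |α| + T := by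
  obtain ⟨hl, hu⟩ := arcCoord_mem_Ico n α x
  rw [abs_le]
  constructor <;> linarith [neg_abs_le α, le_abs_self α]

theorem arcCoord_add (h : arcCoord n α x + arcCoord n β y < α + β + T) :
    arcCoord n (α + β) (x + y) = arcCoord n α x + arcCoord n β y := by
  refine (arcCoord_eq_iff ⟨?_, h⟩).2 ?_
  · exact add_le_add (arcCoord_mem_Ico n α x).1 (arcCoord_mem_Ico n β y).1
  · rw [AddCircle.coe_add, coe_arcCoord, coe_arcCoord, nsmul_add]

end ArcCoord

section Rn

variable {n : ℕ}

theorem isClosed_Rn_image_Icc (n : ℕ) (c d : ℝ) : IsClosed (Rn n (proj '' Icc c d)) :=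
  isClosed_biUnion_finset fun _ _ ↦
    ((isCompact_Icc.image (AddCircle.continuous_mk' _)).vadd _).isClosed

theorem mem_Rn_iff_exists_nsmul_eq (hn : n ≠ 0) {A : Set 𝕋} {x : 𝕋} :
    x ∈ Rn n A ↔ ∃ y ∈ A, n • x = n • y := by
  have proj_eq_nsmul (k : ℕ) : proj (2 * π * k / n) = k • ((2 * π / n : ℝ) : 𝕋) := by
    rw [proj, ← AddCircle.coe_nsmul, nsmul_eq_mul]
    ring_nf
  have nsmul_eq_iff (y : 𝕋) :
      n • x = n • y ↔ ∃ k : Fin n, x = y + (k : ℕ) • ((2 * π / n : ℝ) : 𝕋) :=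
    QuotientAddGroup.zmultiples_nsmul_eq_nsmul_iff hn
  simp only [Rn, mem_iUnion, Finset.mem_range, mem_vadd_set, vadd_eq_add, proj_eq_nsmul,
    nsmul_eq_iff, Fin.exists_iff]
  constructor
  · rintro ⟨k, hk, y, hy, rfl⟩
    exact ⟨y, hy, k, hk, add_comm _ _⟩
  · rintro ⟨y, hy, k, hk, rfl⟩
    exact ⟨k, hk, y, hy, add_comm _ _⟩

theorem mem_Rn_image_Icc_iff (hn : n ≠ 0) {α c d : ℝ} (hc : α ≤ n * c) (hd : n * d < α + 2 * π)
    {x : 𝕋} : x ∈ Rn n (proj '' Icc c d) ↔ arcCoord n α x ∈ Icc (n * c) (n * d) := by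
  have hn' : (0 : ℝ) < n := by positivity
  rw [mem_Rn_iff_exists_nsmul_eq hn, exists_mem_image]
  constructor
  · rintro ⟨r, ⟨hcr, hrd⟩, hr⟩
    have hcr' : n * c ≤ n * r := by gcongr
    have hrd' : n * r ≤ n * d := by gcongr
    rw [(arcCoord_eq_iff ⟨hc.trans hcr', hrd'.trans_lt hd⟩).2
      (by rw [hr, proj, ← AddCircle.coe_nsmul, nsmul_eq_mul])]
    exact ⟨hcr', hrd'⟩
  · rintro ⟨hcx, hxd⟩
    refine ⟨arcCoord n α x / n, ⟨(le_div_iff₀' hn').2 hcx, (div_le_iff₀' hn').2 hxd⟩, ?_⟩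
    rw [proj, ← AddCircle.coe_nsmul, nsmul_eq_mul, mul_div_cancel₀ _ hn'.ne', coe_arcCoord]

theorem tsupport_subset_Rn_iff (hn : n ≠ 0) {α c d : ℝ} (hc : α ≤ n * c)
    (hd : n * d < α + 2 * π) {E : Type*} [Zero E] {f : 𝕋 → E} :
    tsupport f ⊆ Rn n (proj '' Icc c d) ↔
      ∀ x, f x ≠ 0 → arcCoord n α x ∈ Icc (n * c) (n * d) := by
  rw [tsupport, (isClosed_Rn_image_Icc n c d).closure_subset_iff]
  exact forall₂_congr fun x _ ↦ mem_Rn_image_Icc_iff hn hc hd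

end Rn

section CircConvPow

open scoped Convolution

variable {n k : ℕ} {f g : 𝕋 → ℂ} {α β α' β' c : ℝ}

theorem circConv_eq_convolution (f g : 𝕋 → ℂ) :
    circConv f g = f ⋆[ContinuousLinearMap.mul ℂ ℂ] g := rfl

theorem continuous_circConv (hf : Continuous f) (hg : Continuous g) :
    Continuous (circConv f g) := by
  rw [circConv_eq_convolution]
  exact (HasCompactSupport.of_compactSpace g).continuous_convolution_right _ hf.locallyIntegrable hg

theorem continuous_circConvPow (hf : Continuous f) (k : ℕ) : Continuous (circConvPow f k) := by
  induction k with
  | zero => exact hf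
  | succ k ih => exact continuous_circConv ih hf

theorem circConv_mul_fourier (m : ℤ) (f g : 𝕋 → ℂ) :
    circConv (f * ⇑(fourier m)) (g * ⇑(fourier m)) = circConv f g * ⇑(fourier m) :=
  (convolution_mul_eq_of_mul_on_support fun s _ t _ ↦ by
    simp only [fourier_apply, smul_add, AddCircle.toCircle_add, Circle.coe_mul]).symm

theorem circConvPow_mul_fourier (m : ℤ) (f : 𝕋 → ℂ) (k : ℕ) :
    circConvPow (f * ⇑(fourier m)) k = circConvPow f k * ⇑(fourier m) := by
  induction k with
  | zero => rfl
  | succ k ih => rw [circConvPow, circConvPow, ih, circConv_mul_fourier]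

theorem arcCoord_le_of_circConv_ne_zero (hlen : β + β' < α + α' + 2 * π)
    (hf : ∀ x, f x ≠ 0 → arcCoord n α x ≤ β) (hg : ∀ x, g x ≠ 0 → arcCoord n α' x ≤ β') (x : 𝕋)
    (hx : circConv f g x ≠ 0) : arcCoord n (α + α') x ≤ β + β' := by
  obtain ⟨s, hs, t, ht, rfl⟩ := support_convolution_subset (ContinuousLinearMap.mul ℂ ℂ) hx
  have hst := add_le_add (hf s hs) (hg t ht)
  rwa [arcCoord_add (hst.trans_lt hlen)]

theorem expTransform_circConv (hf : Continuous f) (hg : Continuous g)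
    (hlen : β + β' < α + α' + 2 * π) (hfβ : ∀ x, f x ≠ 0 → arcCoord n α x ≤ β)
    (hgβ : ∀ x, g x ≠ 0 → arcCoord n α' x ≤ β') (z : ℂ) :
    expTransform volume (circConv f g) (arcCoord n (α + α')) z =
      expTransform volume f (arcCoord n α) z * expTransform volume g (arcCoord n α') z := by
  have integrable_mul_exp {h : 𝕋 → ℂ} (hh : Continuous h) (γ : ℝ) :
      Integrable fun x ↦ h x * Complex.exp (z * arcCoord n γ x) :=
    integrable_mul_cexp (hh.integrable_of_hasCompactSupport (.of_compactSpace h))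
      (measurable_arcCoord n γ) (abs_arcCoord_le n γ) z
  exact expTransform_convolution (integrable_mul_exp hf α) (integrable_mul_exp hg α')
    fun s hs t ht ↦ arcCoord_add ((add_le_add (hfβ s hs) (hgβ t ht)).trans_lt hlen)

theorem arcCoord_le_of_circConvPow_ne_zero (hlen : (k + 1) * β < (k + 1) * α + 2 * π)
    (hf : ∀ x, f x ≠ 0 → arcCoord n α x ≤ β) (x : 𝕋) (hx : circConvPow f k x ≠ 0) :
    arcCoord n ((k + 1) * α) x ≤ (k + 1) * β := by
  induction k generalizing x with
  | zero => simpa using hf x hx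
  | succ k ih =>
    push_cast at hlen ⊢
    rw [add_one_mul _ α, add_one_mul _ β] at hlen ⊢
    refine arcCoord_le_of_circConv_ne_zero hlen (ih ?_) hf x hx
    nlinarith [two_pi_pos]

theorem expTransform_circConvPow (hf : Continuous f)
    (hlen : (k + 1) * β < (k + 1) * α + 2 * π) (hfβ : ∀ x, f x ≠ 0 → arcCoord n α x ≤ β) (z : ℂ) :
    expTransform volume (circConvPow f k) (arcCoord n ((k + 1) * α)) z =
      expTransform volume f (arcCoord n α) z ^ (k + 1) := by
  induction k with
  | zero => simp [circConvPow]
  | succ k ih =>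
    have hlen' : (k + 1) * β < (k + 1) * α + 2 * π := by
      push_cast at hlen
      nlinarith [two_pi_pos]
    push_cast at hlen ⊢
    rw [add_one_mul _ α, add_one_mul _ β] at hlen
    rw [add_one_mul _ α, pow_succ, ← ih hlen']
    exact expTransform_circConv (continuous_circConvPow hf k) hf hlen
      (arcCoord_le_of_circConvPow_ne_zero hlen' hfβ) hfβ z

theorem expTransform_circConvPow_mul_fourier (hf : Continuous f)
    (hlen : (k + 1) * β < (k + 1) * α + 2 * π) (hfβ : ∀ x, f x ≠ 0 → arcCoord n α x ≤ β)
    (m : ℤ) (z : ℂ) :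
    expTransform volume (circConvPow f k * ⇑(fourier m)) (arcCoord n ((k + 1) * α)) z =
      expTransform volume (f * ⇑(fourier m)) (arcCoord n α) z ^ (k + 1) := by
  rw [← circConvPow_mul_fourier]
  exact expTransform_circConvPow (hf.mul (fourier m).continuous) hlen
    (fun x hx ↦ hfβ x (left_ne_zero_of_mul hx)) z

theorem ae_arcCoord_le_of_circConvPow (hf : Continuous f)
    (hlen : (k + 1) * β < (k + 1) * α + 2 * π) (hfβ : ∀ x, f x ≠ 0 → arcCoord n α x ≤ β)
    (hc : ∀ x, circConvPow f k x ≠ 0 → arcCoord n ((k + 1) * α) x ≤ (k + 1) * c) :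
    ∀ᵐ x, f x ≠ 0 → arcCoord n α x ≤ c :=
  ae_le_of_expTransform_eq_pow k.succ_ne_zero (hf.memLp_of_hasCompactSupport (.of_compactSpace f))
    ((continuous_circConvPow hf k).integrable_of_hasCompactSupport (.of_compactSpace _))
    (measurable_arcCoord n α) (abs_arcCoord_le n α) (by exact_mod_cast hc)
    (expTransform_circConvPow_mul_fourier hf hlen hfβ)

theorem ae_le_arcCoord_of_circConvPow (hf : Continuous f)
    (hlen : (k + 1) * β < (k + 1) * α + 2 * π) (hfβ : ∀ x, f x ≠ 0 → arcCoord n α x ≤ β)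
    (hc : ∀ x, circConvPow f k x ≠ 0 → (k + 1) * c ≤ arcCoord n ((k + 1) * α) x) :
    ∀ᵐ x, f x ≠ 0 → c ≤ arcCoord n α x := by
  have := ae_le_of_expTransform_eq_pow (c := -c) (σ := -arcCoord n ((k + 1) * α))
    k.succ_ne_zero (hf.memLp_of_hasCompactSupport (.of_compactSpace f))
    ((continuous_circConvPow hf k).integrable_of_hasCompactSupport (.of_compactSpace _))
    (measurable_arcCoord n α).neg (fun x ↦ (abs_neg _).trans_le (abs_arcCoord_le n α x))
    (fun x hx ↦ by simpa using hc x hx) fun m z ↦ by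
      simpa only [expTransform_neg] using expTransform_circConvPow_mul_fourier hf hlen hfβ m (-z)
  simpa using this

end CircConvPow

section Titchmarsh

variable {n k : ℕ} {f : 𝕋 → ℂ} {a b a' b' : ℝ}

theorem tsupport_circConvPow_subset_Rn (hn : n ≠ 0) (hlen : (k + 1) * (n * (b - a)) < 2 * π)
    (hs : tsupport f ⊆ Rn n (proj '' Icc a b)) :
    tsupport (circConvPow f k) ⊆ Rn n (proj '' Icc ((k + 1) * a) ((k + 1) * b)) := by
  have hf := (tsupport_subset_Rn_iff hn le_rfl (by nlinarith [two_pi_pos])).1 hs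
  rw [tsupport_subset_Rn_iff hn (mul_left_comm _ _ _).le (by linarith), mul_left_comm (n : ℝ),
    mul_left_comm (n : ℝ)]
  exact fun x hx ↦ ⟨(arcCoord_mem_Ico n _ x).1,
    arcCoord_le_of_circConvPow_ne_zero (by linarith) (fun x hx ↦ (hf x hx).2) x hx⟩

theorem tsupport_subset_Rn_of_circConvPow (hn : n ≠ 0) (hf : Continuous f)
    (hlen : (k + 1) * (n * (b - a)) < 2 * π) (hs : tsupport f ⊆ Rn n (proj '' Icc a b))
    (ha : a ≤ a') (hb : b' ≤ b)
    (hpow : tsupport (circConvPow f k) ⊆ Rn n (proj '' Icc ((k + 1) * a') ((k + 1) * b'))) :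
    tsupport f ⊆ Rn n (proj '' Icc a' b') := by
  have hna : n * a ≤ n * a' := by gcongr
  have hnb : n * b' ≤ n * b := by gcongr
  have hnab : n * b < n * a + 2 * π := by nlinarith [two_pi_pos]
  have hka : (k + 1) * (n * a) ≤ (k + 1) * (n * a') := by gcongr
  have hkb : (k + 1) * (n * b') ≤ (k + 1) * (n * b) := by gcongr
  have hf' := (tsupport_subset_Rn_iff hn le_rfl hnab).1 hs
  have hF := (tsupport_subset_Rn_iff (α := (k + 1) * (n * a)) hn (by linarith)
    (by linarith)).1 hpow
  simp only [mul_left_comm (n : ℝ)] at hF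
  refine tsupport_subset_of_ae (μ := volume) hf (isClosed_Rn_image_Icc n a' b') ?_
  filter_upwards [
    ae_le_arcCoord_of_circConvPow hf (by linarith) (fun x hx ↦ (hf' x hx).2) fun x hx ↦ (hF x hx).1,
    ae_arcCoord_le_of_circConvPow hf (by linarith) (fun x hx ↦ (hf' x hx).2) fun x hx ↦ (hF x hx).2]
    with x hlower hupper hx
  exact (mem_Rn_image_Icc_iff hn hna (by linarith)).2 ⟨hlower hx, hupper hx⟩

end Titchmarsh

/-- Titchmarsh theorem for powers of a distribution on a circle
(continuous-function version). -/
theorem titchmarsh_powers (n p : ℕ) (hn : 1 ≤ n) (hp : 1 ≤ p)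
    (f : 𝕋 → ℂ) (hf : Continuous f)
    (a b : ℝ) (hab : a ≤ b) (hlen : b - a < 2 * π / (p * n))
    (hs : tsupport f ⊆ Rn n (proj '' Icc a b))
    (hmin : ∀ a' b' : ℝ, a ≤ a' → b' ≤ b → (a', b') ≠ (a, b) →
      ¬ tsupport f ⊆ Rn n (proj '' Icc a' b')) :
    tsupport (circConvPow f (p - 1)) ⊆ Rn n (proj '' Icc (p * a) (p * b)) ∧
    ∀ a' b' : ℝ, (p : ℝ) * a ≤ a' → b' ≤ (p : ℝ) * b → (a', b') ≠ ((p : ℝ) * a, (p : ℝ) * b) →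
      ¬ tsupport (circConvPow f (p - 1)) ⊆ Rn n (proj '' Icc a' b') := by
  have hn₀ : n ≠ 0 := Nat.one_le_iff_ne_zero.1 hn
  obtain ⟨k, rfl⟩ := Nat.exists_eq_add_of_le' hp
  rw [Nat.add_sub_cancel]
  push_cast at hlen ⊢
  have hlen' : (k + 1) * (n * (b - a)) < 2 * π := by
    rw [lt_div_iff₀ (by positivity)] at hlen
    linarith
  refine ⟨tsupport_circConvPow_subset_Rn hn₀ hlen' hs, fun a' b' ha hb hne hpow ↦ ?_⟩
  obtain ⟨a', rfl⟩ : ∃ r, a' = (k + 1) * r := ⟨a' / (k + 1), by field_simp⟩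
  obtain ⟨b', rfl⟩ : ∃ r, b' = (k + 1) * r := ⟨b' / (k + 1), by field_simp⟩
  have ha' : a ≤ a' := le_of_mul_le_mul_left ha (by positivity)
  have hb' : b' ≤ b := le_of_mul_le_mul_left hb (by positivity)
  refine hmin a' b' ha' hb' (fun h ↦ hne ?_)
    (tsupport_subset_Rn_of_circConvPow hn₀ hf hlen' hs ha' hb' hpow)
  obtain ⟨rfl, rfl⟩ := Prod.mk.inj h
  rfl

end
end
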